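/- Assume E[Z²] < ∞ and d > 10 (so that pivotal points exist P^{−∞,∞}-almost surely). There exists C < ∞ such that for every i ∈ ℤ and every n ≥ 2, P^{−∞,∞}[ γ_{i+1} − γ_i ≥ n ] ≤ C (log n)^{(d−6)/2} n^{−(d−8)/2}. -/

import Mathlib

/-!
Common vocabulary: subgraphs of `ℤ^d` (traces of branching random walks), graph
distance, effective resistance (unit edge resistances, via the Dirichlet variational
principle), cut-bonds and cut-points; plane trees coded by finite words, branching
random walk embeddings, and the (discrete) laws of Galton–Watson trees written by
their elementary weights.
-/

noncomputable section

open MeasureTheory Filter Topology Set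

/-- Points of the lattice `ℤ^d`. -/
abbrev Zd (d : ℕ) := Fin d → ℤ

/-- A (sub)graph of `ℤ^d`, given by its vertex set and its (oriented) edge set. -/
structure LatticeGraph (d : ℕ) where
  verts : Set (Zd d)
  edges : Set (Zd d × Zd d)

namespace LatticeGraph

variable {d : ℕ}

/-- `G.IsPath m f a b` : `f` is a path of `m` steps from `a` to `b` using edges of `G`
(in either orientation). -/
def IsPath (G : LatticeGraph d) (m : ℕ) (f : ℕ → Zd d) (a b : Zd d) : Prop :=
  f 0 = a ∧ f m = b ∧ ∀ i < m, (f i, f (i + 1)) ∈ G.edges ∨ (f (i + 1), f i) ∈ G.edges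

def Connected (G : LatticeGraph d) (a b : Zd d) : Prop :=
  ∃ m f, G.IsPath m f a b

/-- Graph distance in `G` (junk value `0` if `a` and `b` are not connected). -/
noncomputable def dist (G : LatticeGraph d) (a b : Zd d) : ℕ :=
  sInf {m : ℕ | ∃ f, G.IsPath m f a b}

/-- Dirichlet energy of `h` on `G` (unit conductances). -/
noncomputable def energy (G : LatticeGraph d) (h : Zd d → ℝ) : ℝ :=
  ∑' e : G.edges, (h (e : Zd d × Zd d).1 - h (e : Zd d × Zd d).2) ^ 2

/-- Effective resistance between `a` and `b` in `G` with unit resistances on the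
edges, defined through the Dirichlet variational principle. -/
noncomputable def effRes (G : LatticeGraph d) (a b : Zd d) : ℝ :=
  (sInf {r : ℝ | ∃ h : Zd d → ℝ, h a = 1 ∧ h b = 0 ∧ r = G.energy h})⁻¹

def deleteEdge (G : LatticeGraph d) (e : Zd d × Zd d) : LatticeGraph d :=
  ⟨G.verts, G.edges \ {e, (e.2, e.1)}⟩

/-- A cut-bond: an edge whose removal disconnects its endpoints. -/
def IsCutBond (G : LatticeGraph d) (e : Zd d × Zd d) : Prop :=
  e ∈ G.edges ∧ ¬ (G.deleteEdge e).Connected e.1 e.2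

/-- A cut-point: the endpoint of a cut-bond lying on the same side as the root `0`. -/
def IsCutPoint (G : LatticeGraph d) (x : Zd d) : Prop :=
  ∃ e, G.IsCutBond e ∧
    ((x = e.1 ∧ (G.deleteEdge e).Connected 0 e.1) ∨
      (x = e.2 ∧ (G.deleteEdge e).Connected 0 e.2))

/-- `G.Sep c a b` : every path from `a` to `b` in `G` passes through `c`. -/
def Sep (G : LatticeGraph d) (c a b : Zd d) : Prop :=
  ∀ m f, G.IsPath m f a b → ∃ i ≤ m, f i = c

/-- `y` is the first cut-point encountered on any path from `x` to the root `0`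
(with the convention that, if no cut-point separates `x` from `0`, `y` is a cut-point
at minimal graph distance from `0`). -/
def IsFirstCutPointFrom (G : LatticeGraph d) (x y : Zd d) : Prop :=
  (G.IsCutPoint y ∧ G.Sep y x 0 ∧ ∀ z, G.IsCutPoint z → G.Sep z x 0 → G.Sep z y 0) ∨
    ((¬ ∃ z, G.IsCutPoint z ∧ G.Sep z x 0) ∧ G.IsCutPoint y ∧
      ∀ z, G.IsCutPoint z → G.dist 0 y ≤ G.dist 0 z)

/-- The point `π_n(x)` of the paper. -/
noncomputable def firstCutPoint (G : LatticeGraph d) (x : Zd d) : Zd d :=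
  Classical.epsilon (G.IsFirstCutPointFrom x)

end LatticeGraph

/-! ### Plane trees and branching random walk embeddings -/

/-- A (plane) tree as a set of finite words: contains the root, is closed under
taking parents and under taking younger siblings. -/
def IsPlaneTree (t : Set (List ℕ)) : Prop :=
  [] ∈ t ∧ (∀ (w : List ℕ) (k : ℕ), w ++ [k] ∈ t → w ∈ t) ∧
    ∀ (w : List ℕ) (j k : ℕ), j ≤ k → w ++ [k] ∈ t → w ++ [j] ∈ t

/-- Number of children of the vertex `w` in the tree `t`. -/
noncomputable def childCount (t : Set (List ℕ)) (w : List ℕ) : ℕ :=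
  Set.ncard {k : ℕ | w ++ [k] ∈ t}

/-- A nearest-neighbour step of `ℤ^d`. -/
def IsUnitStep {d : ℕ} (v : Zd d) : Prop :=
  ∃ i : Fin d, (∀ j, j ≠ i → v j = 0) ∧ (v i = 1 ∨ v i = -1)

/-- `g` assigns nearest-neighbour increments along the edges of `t`. -/
def IsBRWEmbedding {d : ℕ} (t : Set (List ℕ)) (g : List ℕ → Zd d) : Prop :=
  ∀ w ∈ t, w ≠ [] → IsUnitStep (g w - g w.dropLast)

/-- The trace of the spatial tree `(t, g)`: the subgraph of `ℤ^d` whose vertices are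
the images of the vertices of `t` and whose edges are the images of the edges of `t`. -/
def traceGraph (d : ℕ) (t : Set (List ℕ)) (g : List ℕ → Zd d) : LatticeGraph d :=
  ⟨g '' t, {e | ∃ w ∈ t, w ≠ ([] : List ℕ) ∧ e = (g w.dropLast, g w)}⟩

open scoped ENNReal

/-- The Galton–Watson weight of a finite plane tree `t` for the offspring law `p`:
`∏_{v ∈ t} p(number of children of v)`. -/
noncomputable def gwWeight (p : PMF ℕ) (t : Set (List ℕ)) : ℝ≥0∞ :=
  ∏ᶠ w ∈ t, p (childCount t w)

/-- The weight of a "bush": the root has `Z̃ - 1` children (`Z̃` the size-biased law,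
`P[Z̃ = k] = k p_k`), each of which generates an independent critical Galton–Watson
tree with offspring law `p`. -/
noncomputable def bushWeight (p : PMF ℕ) (t : Set (List ℕ)) : ℝ≥0∞ :=
  ((childCount t [] + 1 : ℕ) : ℝ≥0∞) * p (childCount t [] + 1) *
    ∏ᶠ w ∈ t \ {([] : List ℕ)}, p (childCount t w)

/-! ### Moment conditions on the offspring law -/

def HasMeanOne (p : PMF ℕ) : Prop := ∑' k : ℕ, (k : ℝ) * (p k).toReal = 1

def FiniteSecondMoment (p : PMF ℕ) : Prop :=
  Summable fun k : ℕ => (k : ℝ) ^ 2 * (p k).toReal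

def PosVariance (p : PMF ℕ) : Prop :=
  0 < ∑' k : ℕ, ((k : ℝ) - 1) ^ 2 * (p k).toReal

def HasExpMoment (p : PMF ℕ) : Prop :=
  ∃ lam : ℝ, 0 < lam ∧ Summable fun k : ℕ => Real.exp (lam * k) * (p k).toReal

/-- The offspring distribution is non-lattice (aperiodic). -/
def AperiodicSupport (p : PMF ℕ) : Prop :=
  ∀ m : ℕ, 2 ≤ m → ∃ k : ℕ, p k ≠ 0 ∧ ¬ ((m : ℤ) ∣ ((k : ℤ) - 1))

/-- Standard deviation `σ_Z` of the offspring law (which has mean one). -/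
noncomputable def sigmaZ (p : PMF ℕ) : ℝ :=
  Real.sqrt (∑' k : ℕ, ((k : ℝ) - 1) ^ 2 * (p k).toReal)

/-- Euclidean distance on `ℤ^d`. -/
noncomputable def euclDist {d : ℕ} (x y : Zd d) : ℝ :=
  Real.sqrt (∑ i, ((x i : ℝ) - (y i : ℝ)) ^ 2)

/-!
### The bi-infinite incipient critical branching random walk `ω_{-∞,∞}`

The model is specified completely: a two-sided nearest-neighbour backbone walk
`walk` together with, at each backbone index `n`, an independent "bush"
(a finite plane tree `btree n` with root mapped to `walk n` and a branching random
walk embedding `bemb n`); the joint law of all cylinder events is prescribed by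
`hlaw` (uniform steps for the walk, size-biased root offspring and critical
Galton–Watson descendants for the bushes, uniform nearest-neighbour increments for
the embeddings).  `piv` enumerates the (a.s. existing) pivotal indices increasingly,
`piv 1` being the smallest positive one.
-/

structure BiInfModel (d : ℕ) (p : PMF ℕ) where
  Ω : Type
  mΩ : MeasurableSpace Ω
  P : @Measure Ω mΩ
  hP : IsProbabilityMeasure P
  walk : ℤ → Ω → Zd d
  btree : ℤ → Ω → Set (List ℕ)
  bemb : ℤ → Ω → List ℕ → Zd d
  piv : ℤ → Ω → ℤ
  hwalk0 : ∀ ω, walk 0 ω = 0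
  hstep : ∀ (n : ℤ) (ω : Ω), IsUnitStep (walk (n + 1) ω - walk n ω)
  hbtree : ∀ (n : ℤ) (ω : Ω), IsPlaneTree (btree n ω) ∧ (btree n ω).Finite
  hbroot : ∀ (n : ℤ) (ω : Ω), bemb n ω ([] : List ℕ) = walk n ω
  hbemb : ∀ (n : ℤ) (ω : Ω), IsBRWEmbedding (btree n ω) (bemb n ω)
  hlaw : ∀ (N : ℕ) (a : ℤ → Zd d), a 0 = 0 →
    (∀ k : ℤ, -(N : ℤ) ≤ k → k < (N : ℤ) → IsUnitStep (a (k + 1) - a k)) →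
    ∀ F : Finset ℤ, (∀ m ∈ F, -(N : ℤ) ≤ m ∧ m ≤ (N : ℤ)) →
    ∀ t : ℤ → Set (List ℕ), (∀ m ∈ F, IsPlaneTree (t m) ∧ (t m).Finite) →
    ∀ g : ℤ → List ℕ → Zd d,
      (∀ m ∈ F, g m ([] : List ℕ) = a m ∧ IsBRWEmbedding (t m) (g m)) →
    P {ω | (∀ k : ℤ, -(N : ℤ) ≤ k → k ≤ (N : ℤ) → walk k ω = a k) ∧
        ∀ m ∈ F, btree m ω = t m ∧ ∀ v ∈ t m, bemb m ω v = g m v}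
      = ((2 * d : ℕ) : ℝ≥0∞)⁻¹ ^ (2 * N) *
        ∏ m ∈ F, bushWeight p (t m) * ((2 * d : ℕ) : ℝ≥0∞)⁻¹ ^ ((t m).ncard - 1)
  hpiv : ∀ᵐ ω ∂P,
    (StrictMono fun i => piv i ω) ∧
    (∀ i : ℤ,
      (⋃ n ∈ Set.Iic (piv i ω), bemb n ω '' btree n ω) ∩
        (⋃ n ∈ Set.Ici (piv i ω + 1), bemb n ω '' btree n ω) = ∅) ∧
    (∀ j : ℤ,
      ((⋃ n ∈ Set.Iic j, bemb n ω '' btree n ω) ∩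
        (⋃ n ∈ Set.Ici (j + 1), bemb n ω '' btree n ω) = ∅) → (∃ i : ℤ, piv i ω = j)) ∧
    0 < piv 1 ω ∧
    ∀ j : ℤ, 0 < j →
      ((⋃ n ∈ Set.Iic j, bemb n ω '' btree n ω) ∩
        (⋃ n ∈ Set.Ici (j + 1), bemb n ω '' btree n ω) = ∅) → piv 1 ω ≤ j

namespace BiInfModel

variable {d : ℕ} {p : PMF ℕ}

/-- The vertex set `B^{(n)}(α(n))` of the bush attached at backbone index `n`. -/
def bushVerts (M : BiInfModel d p) (n : ℤ) (ω : M.Ω) : Set (Zd d) :=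
  M.bemb n ω '' M.btree n ω

/-- `α(i)` is a pivotal point: `B(α((-∞,i])) ∩ B(α([i+1,∞))) = ∅`. -/
def Pivotal (M : BiInfModel d p) (i : ℤ) (ω : M.Ω) : Prop :=
  (⋃ n ∈ Set.Iic i, M.bushVerts n ω) ∩ (⋃ n ∈ Set.Ici (i + 1), M.bushVerts n ω) = ∅

/-- The trace `ω_{-∞,∞}` as a subgraph of `ℤ^d` (bushes together with the backbone
edges). -/
noncomputable def graph (M : BiInfModel d p) (ω : M.Ω) : LatticeGraph d :=
  ⟨(⋃ n : ℤ, M.bushVerts n ω),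
    (⋃ n : ℤ, (traceGraph d (M.btree n ω) (M.bemb n ω)).edges) ∪
      ⋃ n : ℤ, {(M.walk n ω, M.walk (n + 1) ω)}⟩

/-- Conditional expectation given that `0` is a pivotal point. -/
noncomputable def condPiv (M : BiInfModel d p) (X : M.Ω → ℝ) : ℝ :=
  (∫ ω in {ω | M.Pivotal 0 ω}, X ω ∂M.P) / (M.P {ω | M.Pivotal 0 ω}).toReal

/-- `ρ₁ = E[R_eff(0, α(γ₁)) | 0 pivotal] / E[γ₁ | 0 pivotal]`. -/
noncomputable def rho1 (M : BiInfModel d p) : ℝ :=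
  M.condPiv (fun ω => (M.graph ω).effRes 0 (M.walk (M.piv 1 ω) ω)) /
    M.condPiv fun ω => (M.piv 1 ω : ℝ)

/-- `ρ₂ = E[d_{ω_{-∞,∞}}(0, α(γ₁)) | 0 pivotal] / E[γ₁ | 0 pivotal]`
(this is also the constant `σ_G`). -/
noncomputable def rho2 (M : BiInfModel d p) : ℝ :=
  M.condPiv (fun ω => ((M.graph ω).dist 0 (M.walk (M.piv 1 ω) ω) : ℝ)) /
    M.condPiv fun ω => (M.piv 1 ω : ℝ)

/-- `ρ = E[R_eff(0, α(γ₁)) | 0 pivotal] / E[d_{ω_{-∞,∞}}(0, α(γ₁)) | 0 pivotal]`. -/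
noncomputable def rhoR (M : BiInfModel d p) : ℝ :=
  M.condPiv (fun ω => (M.graph ω).effRes 0 (M.walk (M.piv 1 ω) ω)) /
    M.condPiv fun ω => ((M.graph ω).dist 0 (M.walk (M.piv 1 ω) ω) : ℝ)

end BiInfModel

/-!
STATEMENT 15.  Assume `E[Z²] < ∞` and `d > 10` (so that pivotal points exist
`P^{-∞,∞}`-a.s., which is part of the model `M`).  There exists `C < ∞` such that for
every `i ∈ ℤ` and every `n ≥ 2`,
`P^{-∞,∞}[γ_{i+1} - γ_i ≥ n] ≤ C (log n)^{(d-6)/2} n^{-(d-8)/2}`.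
-/

/-! ### Simple random walk kernel and the return probability bound -/

/-- The unit vectors of `ℤ^d`. -/
def stepVec {d : ℕ} (s : Fin d × Bool) : Zd d := Pi.single s.1 (if s.2 then 1 else -1)

/-- Real valued simple random walk kernel. -/
def srwR (d : ℕ) : ℕ → Zd d → ℝ
  | 0, z => if z = 0 then 1 else 0
  | l + 1, z => ∑ s : Fin d × Bool, (2 * d : ℝ)⁻¹ * srwR d l (z - stepVec s)

/-- Simple random walk kernel with values in `ℝ≥0∞`. -/
def srwQ (d : ℕ) : ℕ → Zd d → ℝ≥0∞
  | 0, z => if z = 0 then 1 else 0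
  | l + 1, z => ∑ s : Fin d × Bool, ((2 * d : ℕ) : ℝ≥0∞)⁻¹ * srwQ d l (z - stepVec s)

lemma srwR_nonneg (d l : ℕ) (z : Zd d) : 0 ≤ srwR d l z := by
  induction l generalizing z with
  | zero => simp only [srwR]; split_ifs <;> norm_num
  | succ l ih =>
    simp only [srwR]
    exact Finset.sum_nonneg fun s _ => mul_nonneg (by positivity) (ih _)

lemma srwQ_eq (d : ℕ) (hd : 0 < d) (l : ℕ) (z : Zd d) :
    srwQ d l z = ENNReal.ofReal (srwR d l z) := by
  induction l generalizing z with
  | zero => simp only [srwR, srwQ]; split_ifs <;> simp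
  | succ l ih =>
    simp only [srwR, srwQ]
    rw [ENNReal.ofReal_sum_of_nonneg
      (fun s _ => mul_nonneg (by positivity) (srwR_nonneg _ _ _))]
    refine Finset.sum_congr rfl fun s _ => ?_
    rw [ENNReal.ofReal_mul (by positivity), ih]
    congr 1
    rw [ENNReal.ofReal_inv_of_pos (by positivity)]
    congr 1
    rw [← ENNReal.ofReal_natCast]
    push_cast
    rfl

/-- One period of the circle. -/
def circMeas : Measure ℝ := volume.restrict (Ioc (-(Real.pi / 2)) (3 * Real.pi / 2))

instance : IsFiniteMeasure circMeas := by
  unfold circMeas; infer_instance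

/-- The torus. -/
def torMeas (d : ℕ) : Measure (Fin d → ℝ) := Measure.pi fun _ => circMeas

instance (d : ℕ) : IsFiniteMeasure (torMeas d) := by
  unfold torMeas; infer_instance

/-- The characters. -/
def chr {d : ℕ} (z : Zd d) (θ : Fin d → ℝ) : ℂ :=
  ∏ j, Complex.exp (Complex.I * ((z j : ℝ) * θ j : ℝ))

/-- Characteristic function of a step. -/
def phi {d : ℕ} (θ : Fin d → ℝ) : ℝ := (d : ℝ)⁻¹ * ∑ j, Real.cos (θ j)

lemma circ_integral (k : ℤ) :
    ∫ x, Complex.exp (Complex.I * ((k : ℝ) * x : ℝ)) ∂circMeas =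
      if k = 0 then (2 * Real.pi : ℂ) else 0 := by
  unfold circMeas
  have hle : -(Real.pi / 2) ≤ 3 * Real.pi / 2 := by linarith [Real.pi_pos]
  rw [← intervalIntegral.integral_of_le hle]
  split_ifs with h
  · subst h
    simp
    ring
  · have hk : Complex.I * (k : ℂ) ≠ 0 := by
      simp [h]
    have := integral_exp_mul_complex (a := -(Real.pi / 2)) (b := 3 * Real.pi / 2) hk
    have e : (fun x : ℝ => Complex.exp (Complex.I * ((k : ℝ) * x : ℝ))) =
        fun x : ℝ => Complex.exp (Complex.I * (k : ℂ) * x) := by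
      funext x; congr 1; push_cast; ring
    rw [e, this]
    have : Complex.exp (Complex.I * k * ((3 * Real.pi / 2 : ℝ) : ℂ)) =
        Complex.exp (Complex.I * k * ((-(Real.pi / 2) : ℝ) : ℂ)) := by
      rw [Complex.exp_eq_exp_iff_exists_int]
      refine ⟨k, ?_⟩
      push_cast; ring
    rw [this]; simp

lemma chr_integral {d : ℕ} (z : Zd d) :
    ∫ θ, chr z θ ∂torMeas d = if z = 0 then (2 * Real.pi : ℂ) ^ d else 0 := by
  unfold chr torMeas
  rw [integral_fintype_prod_eq_prod (f := fun j x =>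
    Complex.exp (Complex.I * ((z j : ℝ) * x : ℝ)))]
  simp only [circ_integral]
  split_ifs with h
  · subst h; simp
  · obtain ⟨j, hj⟩ := Function.ne_iff.1 h
    exact Finset.prod_eq_zero (Finset.mem_univ j) (by simpa using hj)

lemma norm_chr {d : ℕ} (z : Zd d) (θ : Fin d → ℝ) : ‖chr z θ‖ = 1 := by
  unfold chr
  rw [norm_prod]
  refine Finset.prod_eq_one fun j _ => ?_
  rw [mul_comm]; exact Complex.norm_exp_ofReal_mul_I _

lemma chr_cont {d : ℕ} (z : Zd d) : Continuous (chr z) := by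
  unfold chr; fun_prop

lemma phi_cont {d : ℕ} : Continuous (phi (d := d)) := by
  unfold phi; fun_prop

lemma abs_phi_le {d : ℕ} (hd : 0 < d) (θ : Fin d → ℝ) :
    |phi θ| ≤ (d : ℝ)⁻¹ * ∑ j, |Real.cos (θ j)| := by
  unfold phi
  rw [abs_mul, abs_of_nonneg (by positivity : (0 : ℝ) ≤ (d : ℝ)⁻¹)]
  gcongr
  exact Finset.abs_sum_le_sum_abs _ _

lemma abs_phi_le_one {d : ℕ} (hd : 0 < d) (θ : Fin d → ℝ) : |phi θ| ≤ 1 := by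
  refine (abs_phi_le hd θ).trans ?_
  have : ∑ j, |Real.cos (θ j)| ≤ ∑ j : Fin d, (1 : ℝ) :=
    Finset.sum_le_sum fun j _ => Real.abs_cos_le_one _
  simp at this
  have hd' : (0 : ℝ) < d := by exact_mod_cast hd
  rw [inv_mul_le_iff₀ hd']; linarith

lemma phi_chr_integrable {d : ℕ} (hd : 0 < d) (l : ℕ) (z : Zd d) :
    Integrable (fun θ => (phi θ : ℂ) ^ l * chr z θ) (torMeas d) := by
  refine Integrable.of_bound (C := 1) ?_ ?_
  · have h1 := chr_cont z
    have h2 := phi_cont (d := d)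
    exact Continuous.aestronglyMeasurable (by fun_prop)
  · refine Eventually.of_forall fun θ => ?_
    rw [norm_mul, norm_chr, mul_one, norm_pow, Complex.norm_real, Real.norm_eq_abs]
    exact pow_le_one₀ (abs_nonneg _) (abs_phi_le_one hd θ)

lemma chr_sub_step {d : ℕ} (z : Zd d) (s : Fin d × Bool) (θ : Fin d → ℝ) :
    chr (z - stepVec s) θ =
      chr z θ * Complex.exp (Complex.I * ((if s.2 then -θ s.1 else θ s.1 : ℝ) : ℂ)) := by
  unfold chr
  simp only [← Complex.exp_sum]
  rw [← Complex.exp_add]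
  congr 1
  rw [← Finset.mul_sum, ← Finset.mul_sum, ← mul_add]
  congr 1
  rw [← Complex.ofReal_sum, ← Complex.ofReal_sum, ← Complex.ofReal_add]
  congr 1
  have : ∀ j, (((z - stepVec s) j : ℤ) : ℝ) * θ j = z j * θ j -
      (if j = s.1 then (if s.2 then 1 else -1 : ℝ) * θ j else 0) := by
    intro j
    simp only [stepVec, Pi.sub_apply, Pi.single_apply]
    split_ifs <;> push_cast <;> ring
  simp only [this, Finset.sum_sub_distrib]
  simp
  split_ifs <;> ring

lemma sum_chr {d : ℕ} (z : Zd d) (θ : Fin d → ℝ) :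
    ∑ s : Fin d × Bool, (2 * d : ℂ)⁻¹ * chr (z - stepVec s) θ = phi θ * chr z θ := by
  simp only [chr_sub_step]
  rw [← Finset.mul_sum, ← Finset.mul_sum, Fintype.sum_prod_type]
  have : ∀ j : Fin d, ∑ b : Bool, Complex.exp (Complex.I *
      ((if (j, b).2 then -θ (j, b).1 else θ (j, b).1 : ℝ) : ℂ)) = 2 * Complex.cos (θ j) := by
    intro j
    simp [Complex.cos]
    rw [add_comm]
    ring_nf
  simp only [this]
  unfold phi
  push_cast
  rw [← Finset.mul_sum, mul_inv]
  ring

lemma srw_fourier {d : ℕ} (hd : 0 < d) (l : ℕ) (z : Zd d) :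
    ∫ θ, (phi θ : ℂ) ^ l * chr z θ ∂torMeas d = (2 * Real.pi : ℂ) ^ d * srwR d l z := by
  induction l generalizing z with
  | zero =>
    simp only [pow_zero, one_mul, chr_integral, srwR]
    split_ifs <;> simp
  | succ l ih =>
    have : ∀ θ, (phi θ : ℂ) ^ (l + 1) * chr z θ =
        ∑ s : Fin d × Bool, (2 * d : ℂ)⁻¹ * ((phi θ : ℂ) ^ l * chr (z - stepVec s) θ) := by
      intro θ
      rw [pow_succ, mul_assoc, ← sum_chr, Finset.mul_sum]
      refine Finset.sum_congr rfl fun s _ => by ring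
    simp only [this]
    rw [integral_finsetSum _ (fun s _ => (phi_chr_integrable hd l _).const_mul _)]
    simp only [integral_const_mul, ih, srwR]
    push_cast
    rw [Finset.mul_sum]
    refine Finset.sum_congr rfl fun s _ => by ring

lemma gauss_half (c : ℝ) (hc : 0 < c) (a : ℝ)
    (f : ℝ → ℝ) (hf : Continuous f)
    (h : ∀ x ∈ Ioc (a - Real.pi / 2) (a + Real.pi / 2), f x ≤ Real.exp (-c * (x - a) ^ 2)) :
    ∫ x in Ioc (a - Real.pi / 2) (a + Real.pi / 2), f x ≤ Real.sqrt (Real.pi / c) := by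
  have hi : Integrable fun x : ℝ => Real.exp (-c * (x - a) ^ 2) :=
    (integrable_exp_neg_mul_sq hc).comp_sub_right a
  calc ∫ x in Ioc (a - Real.pi / 2) (a + Real.pi / 2), f x
      ≤ ∫ x in Ioc (a - Real.pi / 2) (a + Real.pi / 2), Real.exp (-c * (x - a) ^ 2) := by
        refine setIntegral_mono_on ?_ hi.integrableOn measurableSet_Ioc h
        exact (hf.integrableOn_Icc).mono_set Ioc_subset_Icc_self
    _ ≤ ∫ x, Real.exp (-c * (x - a) ^ 2) :=
        setIntegral_le_integral hi (Eventually.of_forall fun x => (Real.exp_pos _).le)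
    _ = Real.sqrt (Real.pi / c) := by
        rw [integral_sub_right_eq_self (fun x : ℝ => Real.exp (-c * x ^ 2)) a,
          integral_gaussian]

lemma circ_bound (c : ℝ) (hc : 0 < c) :
    ∫ x, Real.exp (-(c * (1 - |Real.cos x|))) ∂circMeas ≤
      2 * Real.sqrt (Real.pi / (c * (2 / Real.pi ^ 2))) := by
  have hc' : 0 < c * (2 / Real.pi ^ 2) := by positivity
  have hcont : Continuous fun x => Real.exp (-(c * (1 - |Real.cos x|))) := by fun_prop
  have hpi := Real.pi_pos
  have hsplit : Ioc (-(Real.pi / 2)) (3 * Real.pi / 2) =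
      Ioc (0 - Real.pi / 2) (0 + Real.pi / 2) ∪
        Ioc (Real.pi - Real.pi / 2) (Real.pi + Real.pi / 2) := by
    have e1 : (0 - Real.pi / 2) = -(Real.pi / 2) := by ring
    have e2 : (0 + Real.pi / 2) = Real.pi / 2 := by ring
    have e3 : (Real.pi - Real.pi / 2) = Real.pi / 2 := by ring
    have e4 : (Real.pi + Real.pi / 2) = 3 * Real.pi / 2 := by ring
    rw [e1, e2, e3, e4, Ioc_union_Ioc_eq_Ioc] <;> linarith
  have key : ∀ y : ℝ, |y| ≤ Real.pi / 2 → Real.exp (-(c * (1 - |Real.cos y|))) ≤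
      Real.exp (-(c * (2 / Real.pi ^ 2)) * y ^ 2) := by
    intro y hy
    rw [Real.exp_le_exp]
    have h2 := Real.cos_le_one_sub_mul_cos_sq (x := y) (by linarith)
    have h3 : 0 ≤ Real.cos y := by
      apply Real.cos_nonneg_of_mem_Icc
      rw [abs_le] at hy; exact ⟨by linarith, by linarith⟩
    rw [abs_of_nonneg h3]
    nlinarith
  unfold circMeas
  rw [hsplit, setIntegral_union]
  · rw [two_mul]
    refine add_le_add (gauss_half _ hc' 0 _ hcont ?_) (gauss_half _ hc' Real.pi _ hcont ?_)
    · intro x hx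
      have := key x (abs_le.2 ⟨by linarith [hx.1], by linarith [hx.2]⟩)
      simpa using this
    · intro x hx
      have := key (x - Real.pi) (abs_le.2 ⟨by linarith [hx.1], by linarith [hx.2]⟩)
      rwa [Real.cos_sub_pi, abs_neg] at this
  · rw [Set.disjoint_left]
    intro x hx hx'
    linarith [hx.2, hx'.1]
  · exact measurableSet_Ioc
  · exact (hcont.integrableOn_Icc).mono_set Ioc_subset_Icc_self
  · exact (hcont.integrableOn_Icc).mono_set Ioc_subset_Icc_self

lemma srwR_bound (d : ℕ) (hd : 0 < d) :
    ∃ C : ℝ, 0 < C ∧ ∀ m : ℕ, 1 ≤ m → srwR d m 0 ≤ C * (m : ℝ) ^ (-((d : ℝ) / 2)) := by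
  have hpi := Real.pi_pos
  have hd' : (0 : ℝ) < d := by exact_mod_cast hd
  set A : ℝ := 2 * Real.sqrt (Real.pi * (d * Real.pi ^ 2 / 2)) with hA
  refine ⟨((2 * Real.pi) ^ d)⁻¹ * A ^ d, by positivity, fun m hm => ?_⟩
  have hm' : (0 : ℝ) < m := by exact_mod_cast hm
  have h1 := srw_fourier hd m (0 : Zd d)
  have h2 : (2 * Real.pi) ^ d * srwR d m 0 ≤ ∫ θ, |phi θ| ^ m ∂torMeas d := by
    have : ‖(2 * Real.pi : ℂ) ^ d * srwR d m 0‖ = (2 * Real.pi) ^ d * srwR d m 0 := by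
      rw [norm_mul, Complex.norm_real, norm_pow, Real.norm_of_nonneg (srwR_nonneg _ _ _)]
      congr 2
      rw [norm_mul, Complex.norm_real, Real.norm_of_nonneg hpi.le]; simp
    rw [← this, ← h1]
    refine (norm_integral_le_integral_norm _).trans (le_of_eq ?_)
    congr 1
    funext θ
    rw [norm_mul, norm_chr, mul_one, norm_pow, Complex.norm_real, Real.norm_eq_abs]
  have h3 : ∀ θ : Fin d → ℝ, |phi θ| ^ m ≤
      ∏ j, Real.exp (-((m / d : ℝ) * (1 - |Real.cos (θ j)|))) := by
    intro θ
    rw [← Real.exp_sum]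
    have h4 : |phi θ| ≤ Real.exp (|phi θ| - 1) := by
      have := Real.add_one_le_exp (|phi θ| - 1); linarith
    calc |phi θ| ^ m ≤ Real.exp (|phi θ| - 1) ^ m := by gcongr
      _ = Real.exp (m * (|phi θ| - 1)) := by rw [← Real.exp_nat_mul]
      _ ≤ _ := by
        rw [Real.exp_le_exp]
        have h5 := abs_phi_le hd θ
        have : ∑ j, -((m / d : ℝ) * (1 - |Real.cos (θ j)|)) =
            m * ((d : ℝ)⁻¹ * ∑ j, |Real.cos (θ j)| - 1) := by
          rw [Finset.sum_neg_distrib, ← Finset.mul_sum, Finset.sum_sub_distrib]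
          simp
          field_simp
          ring
        rw [this]
        gcongr
  have h6 : ∫ θ, |phi θ| ^ m ∂torMeas d ≤
      ∫ θ, ∏ j, Real.exp (-((m / d : ℝ) * (1 - |Real.cos (θ j)|))) ∂torMeas d := by
    refine integral_mono_of_nonneg (Eventually.of_forall fun θ => by positivity) ?_
      (Eventually.of_forall h3)
    refine Integrable.of_bound (C := 1) (Continuous.aestronglyMeasurable (by fun_prop))
      (Eventually.of_forall fun θ => ?_)
    rw [Real.norm_of_nonneg (Finset.prod_nonneg fun _ _ => (Real.exp_pos _).le)]
    refine Finset.prod_le_one (fun _ _ => (Real.exp_pos _).le) fun j _ => ?_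
    rw [Real.exp_le_one_iff]
    have := Real.abs_cos_le_one (θ j)
    have h0 : 0 ≤ (m / d : ℝ) * (1 - |Real.cos (θ j)|) :=
      mul_nonneg (by positivity) (by linarith)
    linarith
  have h7 : ∫ θ, ∏ j, Real.exp (-((m / d : ℝ) * (1 - |Real.cos (θ j)|))) ∂torMeas d =
      (∫ x, Real.exp (-((m / d : ℝ) * (1 - |Real.cos x|))) ∂circMeas) ^ d := by
    unfold torMeas
    rw [integral_fintype_prod_eq_prod (f := fun _ x =>
      Real.exp (-((m / d : ℝ) * (1 - |Real.cos x|))))]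
    simp
  have h8 := circ_bound (m / d) (by positivity)
  have h9 : 2 * Real.sqrt (Real.pi / ((m / d) * (2 / Real.pi ^ 2))) =
      A * (m : ℝ) ^ (-(1 / 2) : ℝ) := by
    rw [Real.rpow_neg hm'.le, ← Real.sqrt_eq_rpow, hA, mul_assoc, ← div_eq_mul_inv,
      ← Real.sqrt_div (by positivity)]
    congr 2
    field_simp
  have h10 : (0:ℝ) ≤ ∫ x, Real.exp (-((m / d : ℝ) * (1 - |Real.cos x|))) ∂circMeas :=
    integral_nonneg fun x => (Real.exp_pos _).le
  have h11 : (2 * Real.pi) ^ d * srwR d m 0 ≤ (A * (m : ℝ) ^ (-(1 / 2) : ℝ)) ^ d := by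
    calc _ ≤ _ := h2
      _ ≤ _ := h6
      _ = _ := h7
      _ ≤ _ := by
        rw [← h9]; gcongr
  rw [mul_pow A, ← Real.rpow_natCast ((m : ℝ) ^ (-(1 / 2) : ℝ)), ← Real.rpow_mul hm'.le] at h11
  have h12 : (-(1 / 2) : ℝ) * d = -((d : ℝ) / 2) := by ring
  rw [h12] at h11
  rw [mul_assoc, le_inv_mul_iff₀ (by positivity)]
  exact h11

lemma srwQ_neg (d l : ℕ) (z : Zd d) : srwQ d l (-z) = srwQ d l z := by
  induction l generalizing z with
  | zero => simp [srwQ]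
  | succ l ih =>
    simp only [srwQ]
    refine Fintype.sum_equiv (Equiv.prodCongr (Equiv.refl _) Equiv.boolNot) _ _ fun s => ?_
    congr 1
    rw [← ih]
    congr 1
    obtain ⟨j, b⟩ := s
    have : stepVec (d := d) (j, !b) = - stepVec (j, b) := by
      unfold stepVec
      rw [← Pi.single_neg]
      cases b <;> simp
    simp [this]
    abel

lemma srwQ_add (d a b : ℕ) (z : Zd d) :
    srwQ d (a + b) z = ∑' x, srwQ d a x * srwQ d b (z - x) := by
  induction a generalizing z with
  | zero =>
    simp only [srwQ, zero_add]
    rw [tsum_eq_single 0]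
    · simp
    · intro x hx; simp [hx]
  | succ a ih =>
    have : a + 1 + b = (a + b) + 1 := by ring
    rw [this]
    simp only [srwQ, ih, Finset.sum_mul]
    rw [Summable.tsum_finsetSum (fun _ _ => ENNReal.summable)]
    refine Finset.sum_congr rfl fun s _ => ?_
    rw [← ENNReal.tsum_mul_left, ← (Equiv.subRight (stepVec s)).tsum_eq]
    refine tsum_congr fun x => ?_
    simp [mul_assoc]

lemma srwQ_three (d a l b : ℕ) :
    ∑' (X : Zd d) (z : Zd d) (Y : Zd d),
      (if X = z + Y then srwQ d a X * srwQ d b Y * srwQ d l z else 0) =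
      srwQ d (a + l + b) 0 := by
  rw [add_assoc, srwQ_add]
  refine tsum_congr fun X => ?_
  rw [zero_sub, srwQ_neg, srwQ_add, ← ENNReal.tsum_mul_left]
  refine tsum_congr fun z => ?_
  rw [tsum_eq_single (X - z)]
  · simp; ring
  · intro Y hY
    rw [if_neg]
    rintro rfl; simp at hY

/-! ### Step law, and sums of independent steps -/

/-- Law of a step of simple random walk. -/
def stepLaw (d : ℕ) : Measure (Zd d) :=
  ∑ s : Fin d × Bool, ((2 * d : ℕ) : ℝ≥0∞)⁻¹ • Measure.dirac (stepVec s)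

instance stepLaw_prob (d : ℕ) [NeZero d] : IsProbabilityMeasure (stepLaw d) := by
  constructor
  simp [stepLaw, Finset.sum_const, nsmul_eq_mul]
  have hd : (d : ℝ≥0∞) ≠ 0 := by simp [NeZero.ne d]
  rw [mul_comm (2 : ℝ≥0∞)]
  exact ENNReal.mul_inv_cancel (by simp [NeZero.ne d]) (by finiteness)

lemma stepVec_inj {d : ℕ} : Function.Injective (stepVec (d := d)) := by
  rintro ⟨i, b⟩ ⟨j, c⟩ h
  have hi := congrFun h i
  by_cases hij : i = j
  · subst hij
    simp [stepVec] at hi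
    cases b <;> cases c <;> simp_all
  · exfalso
    simp [stepVec, Pi.single_apply, hij] at hi
    split_ifs at hi <;> simp at hi

lemma stepLaw_unit {d : ℕ} (v : Zd d) (hv : IsUnitStep v) :
    stepLaw d {v} = ((2 * d : ℕ) : ℝ≥0∞)⁻¹ := by
  obtain ⟨i, h1, h2⟩ := hv
  have : ∃ s, v = stepVec s := by
    refine ⟨(i, decide (v i = 1)), ?_⟩
    funext j
    by_cases hj : j = i
    · subst hj
      rcases h2 with h | h <;> simp [stepVec, h]
    · simp [stepVec, Pi.single_apply, hj, h1 j hj]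
  obtain ⟨s, rfl⟩ := this
  simp only [stepLaw, Measure.coe_finsetSum, Finset.sum_apply, Measure.smul_apply, smul_eq_mul]
  rw [Finset.sum_eq_single s]
  · simp
  · intro t _ hts
    rw [Measure.dirac_apply' _ (measurableSet_singleton _)]
    simp [stepVec_inj.eq_iff, hts]
  · simp

lemma lintegral_stepLaw {d : ℕ} (f : Zd d → ℝ≥0∞) :
    ∫⁻ v, f v ∂stepLaw d = ∑ s, ((2 * d : ℕ) : ℝ≥0∞)⁻¹ * f (stepVec s) := by
  simp only [stepLaw]
  rw [lintegral_finsetSum_measure]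
  refine Finset.sum_congr rfl fun s _ => ?_
  rw [lintegral_smul_measure, lintegral_dirac]
  rfl

lemma pi_step_sum {d : ℕ} [NeZero d] (l : ℕ) (z : Zd d) :
    Measure.pi (fun _ : Fin l => stepLaw d) {x | ∑ k, x k = z} = srwQ d l z := by
  induction l generalizing z with
  | zero =>
    simp only [Finset.univ_eq_empty, Finset.sum_empty, srwQ]
    by_cases h : z = 0
    · subst h; simp
    · simp [h, Ne.symm h]
  | succ l ih =>
    have hmp := measurePreserving_piFinSuccAbove (fun _ : Fin (l + 1) => stepLaw d) 0
    have hS : MeasurableSet {q : Zd d × (Fin l → Zd d) | q.1 + ∑ k, q.2 k = z} := by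
      apply measurableSet_eq_fun <;> fun_prop
    have := hmp.measure_preimage hS.nullMeasurableSet
    have e : (MeasurableEquiv.piFinSuccAbove (fun _ : Fin (l + 1) => Zd d) 0) ⁻¹'
        {q : Zd d × (Fin l → Zd d) | q.1 + ∑ k, q.2 k = z} = {x | ∑ k, x k = z} := by
      ext x
      simp [Fin.sum_univ_succ, MeasurableEquiv.piFinSuccAbove, Fin.insertNthEquiv, Fin.removeNth,
        Fin.tail]
    rw [e] at this
    rw [this, Measure.prod_apply hS, lintegral_stepLaw]
    simp only [srwQ]
    refine Finset.sum_congr rfl fun s _ => ?_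
    congr 1
    rw [← ih]
    congr 1
    ext y
    simp [eq_sub_iff_add_eq, add_comm]

lemma infinitePi_step_sum {d : ℕ} [NeZero d] {ι : Type*} (l : ℕ) (f : Fin l → ι)
    (hf : Function.Injective f) (z : Zd d) :
    Measure.infinitePi (fun _ : ι => stepLaw d) {x | ∑ k, x (f k) = z} = srwQ d l z := by
  have h := Measure.map_infinitePi_infinitePi_of_inj (P := fun _ : ι => stepLaw d) hf
  rw [Measure.infinitePi_eq_pi (ι := Fin l)] at h
  rw [← pi_step_sum, ← h, Measure.map_apply (by fun_prop)]
  · rfl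
  · apply measurableSet_eq_fun <;> fun_prop

/-! ### Galton-Watson bushes from independent offspring numbers -/

/-- Size-biased minus one. -/
def tiltLaw (p : PMF ℕ) : Measure ℕ :=
  Measure.sum fun k : ℕ => (((k + 1 : ℕ) : ℝ≥0∞) * p (k + 1)) • Measure.dirac k

lemma tiltLaw_singleton (p : PMF ℕ) (k : ℕ) :
    tiltLaw p {k} = ((k + 1 : ℕ) : ℝ≥0∞) * p (k + 1) := by
  simp only [tiltLaw]
  rw [Measure.sum_apply _ (measurableSet_singleton _), tsum_eq_single k]
  · simp
  · intro j hj; simp [hj]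

lemma mean_one_ennreal (p : PMF ℕ) (h : HasMeanOne p) :
    ∑' k : ℕ, (k : ℝ≥0∞) * p k = 1 := by
  have hs : Summable fun k : ℕ => (k : ℝ) * (p k).toReal := by
    by_contra hc
    have := tsum_eq_zero_of_not_summable hc
    unfold HasMeanOne at h
    rw [this] at h; norm_num at h
  have := ENNReal.ofReal_tsum_of_nonneg (fun k => by positivity) hs
  unfold HasMeanOne at h
  rw [h, ENNReal.ofReal_one] at this
  rw [this]
  refine tsum_congr fun k => ?_
  rw [ENNReal.ofReal_mul (by positivity), ENNReal.ofReal_toReal (p.apply_ne_top k),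
    ENNReal.ofReal_natCast]

lemma second_moment_ennreal (p : PMF ℕ) (h : FiniteSecondMoment p) :
    ∑' k : ℕ, (k : ℝ≥0∞) ^ 2 * p k ≠ ⊤ := by
  have := ENNReal.ofReal_tsum_of_nonneg (fun k => by positivity) h
  have e : ∑' k : ℕ, (k : ℝ≥0∞) ^ 2 * p k =
      ∑' k : ℕ, ENNReal.ofReal ((k : ℝ) ^ 2 * (p k).toReal) := by
    refine tsum_congr fun k => ?_
    rw [ENNReal.ofReal_mul (by positivity), ENNReal.ofReal_toReal (p.apply_ne_top k),
      ENNReal.ofReal_pow (by positivity), ENNReal.ofReal_natCast]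
  rw [e, ← this]
  exact ENNReal.ofReal_ne_top

instance tiltLaw_prob (p : PMF ℕ) [h : Fact (HasMeanOne p)] :
    IsProbabilityMeasure (tiltLaw p) := by
  constructor
  have h1 := mean_one_ennreal p h.out
  rw [tsum_eq_zero_add' ENNReal.summable] at h1
  simp only [tiltLaw, Measure.sum_apply _ MeasurableSet.univ]
  simpa using h1

/-- Offspring law at a vertex. -/
def offLaw (p : PMF ℕ) (w : List ℕ) : Measure ℕ :=
  if w = [] then tiltLaw p else p.toMeasure

instance offLaw_prob (p : PMF ℕ) [h : Fact (HasMeanOne p)] (w : List ℕ) :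
    IsProbabilityMeasure (offLaw p w) := by
  unfold offLaw; split_ifs <;> infer_instance

/-- Tree built from the offspring numbers. -/
def treeOf (N : List ℕ → ℕ) : Set (List ℕ) :=
  {w | ∀ (i : ℕ) (h : i < w.length), w[i] < N (w.take i)}

/-- Embedding built from the steps. -/
def embOf {d : ℕ} (s : List ℕ → Zd d) (w : List ℕ) : Zd d :=
  ∑ i : Fin w.length, s (w.take (i + 1))

lemma nil_mem_treeOf (N : List ℕ → ℕ) : [] ∈ treeOf N := by
  intro i h; simp at h

lemma snoc_mem_treeOf (N : List ℕ → ℕ) (w : List ℕ) (k : ℕ) :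
    w ++ [k] ∈ treeOf N ↔ w ∈ treeOf N ∧ k < N w := by
  constructor
  · intro h
    refine ⟨fun i hi => ?_, ?_⟩
    · have := h i (by simp; omega)
      rwa [List.getElem_append_left hi, List.take_append_of_le_length hi.le] at this
    · have := h w.length (by simp)
      simpa using this
  · rintro ⟨h1, h2⟩ i hi
    simp at hi
    rcases Nat.lt_or_eq_of_le (by simpa [Nat.lt_succ_iff] using hi : i ≤ w.length) with h | h
    · rw [List.getElem_append_left h, List.take_append_of_le_length h.le]
      exact h1 i h
    · subst h; simpa using h2

lemma embOf_nil {d : ℕ} (s : List ℕ → Zd d) : embOf s [] = 0 := by simp [embOf]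

lemma embOf_snoc {d : ℕ} (s : List ℕ → Zd d) (w : List ℕ) (k : ℕ) :
    embOf s (w ++ [k]) = embOf s w + s (w ++ [k]) := by
  unfold embOf
  rw [← Fin.sum_congr' _ (show w.length + 1 = (w ++ [k]).length by simp), Fin.sum_univ_castSucc]
  congr 1
  · refine Finset.sum_congr rfl fun i _ => ?_
    simp only [Fin.val_cast, Fin.val_castSucc]
    rw [List.take_append_of_le_length (by omega)]
  · simp only [Fin.val_cast, Fin.val_last]
    rw [List.take_of_length_le (by simp)]

open Classical in
/-- The bush as a finite set of labelled vertices. -/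
def bushOf {d : ℕ} (y : (List ℕ → ℕ) × (List ℕ → Zd d)) : Finset (List ℕ × Zd d) :=
  if h : (treeOf y.1).Finite then h.toFinset.image (fun w => (w, embOf y.2 w)) else ∅

instance bushMS (d : ℕ) : MeasurableSpace (Finset (List ℕ × Zd d)) := ⊤

instance bushDMS (d : ℕ) : DiscreteMeasurableSpace (Finset (List ℕ × Zd d)) :=
  ⟨fun _ => trivial⟩

lemma meas_treeOf (w : List ℕ) : MeasurableSet {N : List ℕ → ℕ | w ∈ treeOf N} := by
  have : {N : List ℕ → ℕ | w ∈ treeOf N} =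
      ⋂ (i : ℕ), ⋂ (h : i < w.length), {N | w[i] < N (w.take i)} := by
    ext N; simp [treeOf]
  rw [this]
  refine MeasurableSet.iInter fun i => MeasurableSet.iInter fun h => ?_
  exact measurableSet_lt measurable_const (measurable_pi_apply _)

lemma meas_embOf {d : ℕ} (w : List ℕ) : Measurable fun s : List ℕ → Zd d => embOf s w := by
  unfold embOf; fun_prop

lemma bushOf_eq_iff {d : ℕ} (y : (List ℕ → ℕ) × (List ℕ → Zd d))
    (b : Finset (List ℕ × Zd d)) (hb : b ≠ ∅) :
    bushOf y = b ↔ ∀ e : List ℕ × Zd d, e ∈ b ↔ (e.1 ∈ treeOf y.1 ∧ embOf y.2 e.1 = e.2) := by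
  classical
  constructor
  · intro h e
    subst h
    unfold bushOf at hb ⊢
    split_ifs with hf
    · simp only [Finset.mem_image, Set.Finite.mem_toFinset]
      constructor
      · rintro ⟨w, hw, rfl⟩; exact ⟨hw, rfl⟩
      · rintro ⟨h1, h2⟩; exact ⟨e.1, h1, by rw [h2]⟩
    · simp [hf] at hb
  · intro h
    have hf : (treeOf y.1).Finite := by
      refine (b.image Prod.fst).finite_toSet.subset fun w hw => ?_
      simp only [Finset.coe_image, Set.mem_image]
      exact ⟨(w, embOf y.2 w), (h _).2 ⟨hw, rfl⟩, rfl⟩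
    ext e
    rw [h]
    unfold bushOf
    rw [dif_pos hf]
    simp only [Finset.mem_image, Set.Finite.mem_toFinset]
    constructor
    · rintro ⟨w, hw, rfl⟩; exact ⟨hw, rfl⟩
    · rintro ⟨h1, h2⟩; exact ⟨e.1, h1, by rw [h2]⟩

lemma meas_bushOf_ne {d : ℕ} (b : Finset (List ℕ × Zd d)) (hb : b ≠ ∅) :
    MeasurableSet {y : (List ℕ → ℕ) × (List ℕ → Zd d) | bushOf y = b} := by
  simp only [bushOf_eq_iff _ b hb, ofPred_forall]
  refine MeasurableSet.iInter fun e => ?_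
  have h1 : MeasurableSet {y : (List ℕ → ℕ) × (List ℕ → Zd d) |
      e.1 ∈ treeOf y.1 ∧ embOf y.2 e.1 = e.2} :=
    (measurable_fst (meas_treeOf e.1)).inter
      (((meas_embOf e.1).comp measurable_snd) (measurableSet_singleton e.2))
  by_cases he : e ∈ b
  · simpa [he] using h1
  · simp only [he, false_iff]
    exact h1.compl

lemma meas_bushOf {d : ℕ} : Measurable (bushOf (d := d)) := by
  refine measurable_to_countable' fun b => ?_
  by_cases hb : b = ∅
  · subst hb
    have : bushOf (d := d) ⁻¹' {∅} = (⋃ b : {b : Finset (List ℕ × Zd d) // b ≠ ∅},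
        {y | bushOf y = b})ᶜ := by
      ext y
      simp only [mem_preimage, mem_singleton_iff, mem_compl_iff, mem_iUnion, Subtype.exists]
      constructor
      · rintro h ⟨b, hb, h'⟩
        exact hb (h'.symm.trans h)
      · intro h
        by_contra hc
        exact h ⟨bushOf y, hc, rfl⟩
    rw [this]
    refine MeasurableSet.compl (MeasurableSet.iUnion ?_)
    rintro ⟨b, hb⟩
    exact meas_bushOf_ne b hb
  · exact meas_bushOf_ne b hb

/-- Law of the bush data. -/
def bushSpaceLaw (d : ℕ) (p : PMF ℕ) : Measure ((List ℕ → ℕ) × (List ℕ → Zd d)) :=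
  open Classical in
  if h : (d ≠ 0 ∧ HasMeanOne p) then
    haveI : NeZero d := ⟨h.1⟩
    haveI : Fact (HasMeanOne p) := ⟨h.2⟩
    (Measure.infinitePi (fun w => offLaw p w)).prod (Measure.infinitePi (fun _ => stepLaw d))
  else 0

lemma bushSpaceLaw_eq (d : ℕ) (p : PMF ℕ) [h1 : NeZero d] [h2 : Fact (HasMeanOne p)] :
    bushSpaceLaw d p =
      (Measure.infinitePi (fun w => offLaw p w)).prod (Measure.infinitePi (fun _ => stepLaw d)) :=
  dif_pos ⟨h1.out, h2.out⟩

instance (d : ℕ) (p : PMF ℕ) [h1 : NeZero d] [h2 : Fact (HasMeanOne p)] :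
    IsProbabilityMeasure (bushSpaceLaw d p) := by
  rw [bushSpaceLaw_eq]; infer_instance

/-- Law of the bush. -/
def bushLaw (d : ℕ) (p : PMF ℕ) : Measure (Finset (List ℕ × Zd d)) :=
  (bushSpaceLaw d p).map bushOf

instance (d : ℕ) (p : PMF ℕ) [h1 : NeZero d] [h2 : Fact (HasMeanOne p)] :
    IsProbabilityMeasure (bushLaw d p) :=
  Measure.isProbabilityMeasure_map meas_bushOf.aemeasurable

/-- Probability that a word belongs to the tree. -/
def wordWeight (p : PMF ℕ) (v : List ℕ) : ℝ≥0∞ :=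
  ∏ i : Fin v.length, offLaw p (v.take i) (Ioi v[i])

lemma take_inj (v : List ℕ) : Function.Injective fun i : Fin v.length => v.take i := by
  intro i j h
  have := congrArg List.length h
  simp at this
  omega

lemma take_succ_inj (v : List ℕ) : Function.Injective fun i : Fin v.length => v.take (i + 1) := by
  intro i j h
  have := congrArg List.length h
  simp at this
  omega

lemma bushLaw_mem_le (d : ℕ) (p : PMF ℕ) [h1 : NeZero d] [h2 : Fact (HasMeanOne p)]
    (v : List ℕ) (x : Zd d) :
    bushLaw d p {b | (v, x) ∈ b} ≤ wordWeight p v * srwQ d v.length x := by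
  classical
  rw [bushLaw, Measure.map_apply meas_bushOf (by exact trivial)]
  have hsub : bushOf ⁻¹' {b : Finset (List ℕ × Zd d) | (v, x) ∈ b} ⊆
      ((Finset.univ.image (fun i : Fin v.length => v.take i) : Finset (List ℕ)) : Set _).pi
        (fun w => if h : w.length < v.length then Ioi (v[w.length]) else univ) ×ˢ
      {s | ∑ i : Fin v.length, s (v.take (i + 1)) = x} := by
    intro y hy
    have hne : bushOf y ≠ ∅ := by
      intro h
      simp [h] at hy
    have := ((bushOf_eq_iff y _ hne).1 rfl (v, x)).1 hy
    refine ⟨?_, this.2⟩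
    intro w hw
    simp only [Finset.coe_image, Finset.coe_univ, image_univ, mem_range] at hw
    obtain ⟨i, rfl⟩ := hw
    have h3 := this.1 i i.2
    simp [i.2]
    exact h3
  refine (measure_mono hsub).trans ?_
  rw [bushSpaceLaw_eq, Measure.prod_prod]
  refine mul_le_mul' (le_of_eq ?_) (le_of_eq ?_)
  · rw [Measure.infinitePi_pi]
    · rw [Finset.prod_image (fun i _ j _ h => take_inj v h)]
      refine Finset.prod_congr rfl fun i _ => ?_
      congr 1
      simp
    · intros; exact trivial
  · exact infinitePi_step_sum v.length _ (take_succ_inj v) x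

lemma tsum_tail (ρ : Measure ℕ) : ∑' j : ℕ, ρ (Ioi j) = ∑' k : ℕ, (k : ℝ≥0∞) * ρ {k} := by
  have h : ∀ j, ρ (Ioi j) = ∑' k, if j < k then ρ {k} else 0 := by
    intro j
    rw [← Measure.tsum_indicator_apply_singleton ρ (Ioi j) trivial]
    refine tsum_congr fun k => ?_
    simp [indicator_apply]
  simp only [h]
  rw [ENNReal.tsum_comm]
  refine tsum_congr fun k => ?_
  rw [tsum_eq_sum (s := Finset.range k)]
  · rw [Finset.sum_congr rfl (fun j hj => if_pos (Finset.mem_range.1 hj))]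
    simp
  · intro j hj
    rw [if_neg (by simpa using hj)]

lemma tsum_tail_p (p : PMF ℕ) (h : HasMeanOne p) : ∑' j : ℕ, p.toMeasure (Ioi j) = 1 := by
  rw [tsum_tail, ← mean_one_ennreal p h]
  refine tsum_congr fun k => ?_
  rw [PMF.toMeasure_apply_singleton _ _ (measurableSet_singleton k)]

lemma tsum_tail_tilt (p : PMF ℕ) (h : FiniteSecondMoment p) :
    ∑' j : ℕ, tiltLaw p (Ioi j) ≠ ⊤ := by
  rw [tsum_tail]
  refine ne_top_of_le_ne_top (second_moment_ennreal p h) ?_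
  rw [tsum_eq_zero_add' (f := fun k : ℕ => (k : ℝ≥0∞) ^ 2 * p k) ENNReal.summable]
  refine le_trans (ENNReal.tsum_le_tsum fun k => ?_) le_add_self
  rw [tiltLaw_singleton, ← mul_assoc, sq]
  push_cast
  gcongr
  exact le_self_add

/-- Sum over words. -/
lemma tsum_words (g : List ℕ → ℝ≥0∞) :
    ∑' v, g v = ∑' (a : ℕ) (w : Fin a → ℕ), g (List.ofFn w) := by
  rw [← (List.equivSigmaTuple (α := ℕ)).symm.tsum_eq, ENNReal.tsum_sigma']
  rfl

lemma tsum_fn_prod (f : ℕ → ℝ≥0∞) (a : ℕ) :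
    ∑' w : Fin a → ℕ, ∏ i, f (w i) = (∑' j, f j) ^ a := by
  induction a with
  | zero => simp
  | succ a ih =>
    rw [← (Fin.consEquiv (fun _ : Fin (a + 1) => ℕ)).tsum_eq, ENNReal.tsum_prod']
    simp only [Fin.consEquiv, Equiv.coe_fn_mk, Fin.prod_univ_succ, Fin.cons_zero, Fin.cons_succ]
    simp only [ENNReal.tsum_mul_left, ih, ENNReal.tsum_mul_right]
    rw [pow_succ, mul_comm]

lemma wordWeight_ofFn_succ (p : PMF ℕ) (a : ℕ) (w : Fin (a + 1) → ℕ) :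
    wordWeight p (List.ofFn w) = tiltLaw p (Ioi (w 0)) *
      ∏ i : Fin a, p.toMeasure (Ioi (w i.succ)) := by
  unfold wordWeight
  rw [← Fin.prod_congr' _ (show a + 1 = (List.ofFn w).length by simp), Fin.prod_univ_succ]
  congr 1
  · simp [offLaw]
  · refine Finset.prod_congr rfl fun i _ => ?_
    simp [offLaw]

lemma tsum_wordWeight (p : PMF ℕ) (h : HasMeanOne p) (F : ℕ → ℝ≥0∞) :
    ∑' v, wordWeight p v * F v.length ≤
      (1 + ∑' j : ℕ, tiltLaw p (Ioi j)) * ∑' a, F a := by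
  rw [tsum_words, ← ENNReal.tsum_mul_left]
  refine ENNReal.tsum_le_tsum fun a => ?_
  simp only [List.length_ofFn]
  rw [ENNReal.tsum_mul_right]
  gcongr
  cases a with
  | zero =>
    have h0 : wordWeight p [] = 1 := Finset.prod_of_isEmpty (ι := Fin 0) _
    simp [h0]
  | succ a =>
    simp only [wordWeight_ofFn_succ]
    rw [← (Fin.consEquiv (fun _ : Fin (a + 1) => ℕ)).tsum_eq, ENNReal.tsum_prod']
    simp only [Fin.consEquiv, Equiv.coe_fn_mk, Fin.cons_zero, Fin.cons_succ]
    simp only [ENNReal.tsum_mul_left]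
    rw [tsum_fn_prod (fun j => p.toMeasure (Ioi j)), tsum_tail_p p h]
    simp

/-! ### Identification of the bush weights -/

lemma child_iff {t : Set (List ℕ)} (ht : IsPlaneTree t) (hf : t.Finite) (w : List ℕ) (k : ℕ) :
    w ++ [k] ∈ t ↔ k < childCount t w := by
  have hfin : {k : ℕ | w ++ [k] ∈ t}.Finite := by
    refine Set.Finite.preimage (f := fun k : ℕ => w ++ [k]) ?_ hf
    intro a _ b _ h
    simpa using h
  have hex : ∃ n, w ++ [n] ∉ t := by
    obtain ⟨n, hn⟩ := hfin.exists_notMem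
    exact ⟨n, hn⟩
  classical
  have hS : {k : ℕ | w ++ [k] ∈ t} = Iio (Nat.find hex) := by
    ext j
    simp only [mem_ofPred_eq, mem_Iio]
    constructor
    · intro h
      by_contra hc
      exact Nat.find_spec hex (ht.2.2 w _ j (not_lt.1 hc) h)
    · intro h
      have := Nat.find_min hex h
      simpa using this
  have hc : childCount t w = Nat.find hex := by
    unfold childCount
    rw [hS]
    simp [Set.ncard_eq_toFinset_card']
  rw [hc]
  exact Set.ext_iff.1 hS k

lemma treeOf_iff {t : Set (List ℕ)} (ht : IsPlaneTree t) (hf : t.Finite) (N : List ℕ → ℕ) :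
    (∀ w, w ∈ t ↔ w ∈ treeOf N) ↔ ∀ w ∈ t, N w = childCount t w := by
  constructor
  · intro h w hw
    have h1 : ∀ k, k < childCount t w ↔ k < N w := by
      intro k
      rw [← child_iff ht hf, h, snoc_mem_treeOf]
      simp [(h w).1 hw]
    have h2 := h1 (N w)
    have h3 := h1 (childCount t w)
    omega
  · intro h w
    induction w using List.reverseRecOn with
    | nil => simp [ht.1, nil_mem_treeOf]
    | append_singleton w k ih =>
      rw [snoc_mem_treeOf, ← ih]
      constructor
      · intro h1
        have h2 := ht.2.1 w k h1
        exact ⟨h2, by rw [h w h2]; exact (child_iff ht hf w k).1 h1⟩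
      · rintro ⟨h1, h2⟩
        rw [h w h1] at h2
        exact (child_iff ht hf w k).2 h2

lemma embOf_iff {d : ℕ} {t : Set (List ℕ)} (ht : IsPlaneTree t) (g : List ℕ → Zd d)
    (s : List ℕ → Zd d) :
    (∀ w ∈ t, embOf s w = g w - g []) ↔ ∀ w ∈ t, w ≠ [] → s w = g w - g w.dropLast := by
  constructor
  · intro h w hw hne
    obtain ⟨u, k, rfl⟩ : ∃ u k, w = u ++ [k] := ⟨w.dropLast, w.getLast hne,
      (List.dropLast_append_getLast hne).symm⟩
    have h1 := h _ hw
    have h2 := h _ (ht.2.1 u k hw)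
    rw [embOf_snoc, h2] at h1
    simp only [List.dropLast_concat]
    rw [← eq_sub_iff_add_eq'] at h1
    rw [h1]; abel
  · intro h w
    induction w using List.reverseRecOn with
    | nil => intro _; simp [embOf_nil]
    | append_singleton w k ih =>
      intro hw
      rw [embOf_snoc, ih (ht.2.1 w k hw), h _ hw (by simp)]
      simp only [List.dropLast_concat]
      abel

lemma bushLaw_singleton {d : ℕ} (p : PMF ℕ) [h1 : NeZero d] [h2 : Fact (HasMeanOne p)]
    {t : Set (List ℕ)} (ht : IsPlaneTree t) (hf : t.Finite) (g : List ℕ → Zd d)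
    (hg : IsBRWEmbedding t g) :
    bushLaw d p {hf.toFinset.image (fun w => (w, g w - g []))} =
      bushWeight p t * ((2 * d : ℕ) : ℝ≥0∞)⁻¹ ^ (t.ncard - 1) := by
  classical
  set T := hf.toFinset with hT
  have hTm : ∀ w, w ∈ T ↔ w ∈ t := fun w => by simp [hT]
  have hnil : [] ∈ T := (hTm _).2 ht.1
  have hpre : bushOf ⁻¹' {T.image (fun w => (w, g w - g []))} =
      ((T : Set (List ℕ)).pi fun w => {childCount t w}) ×ˢ
      (((T.erase [] : Finset (List ℕ)) : Set (List ℕ)).pi fun w => {g w - g w.dropLast}) := by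
    ext y
    have hne : T.image (fun w => (w, g w - g [])) ≠ ∅ := by
      rw [← Finset.nonempty_iff_ne_empty, Finset.image_nonempty]
      exact ⟨_, hnil⟩
    simp only [mem_preimage, mem_singleton_iff, mem_prod, Set.mem_pi, Finset.mem_coe,
      Finset.mem_erase]
    rw [bushOf_eq_iff _ _ hne]
    have h3 : (∀ w ∈ T, y.1 w = childCount t w) ↔ ∀ w, w ∈ t ↔ w ∈ treeOf y.1 := by
      rw [treeOf_iff ht hf]; simp only [hTm]
    have h4 : (∀ w, w ≠ [] ∧ w ∈ T → y.2 w = g w - g w.dropLast) ↔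
        ∀ w ∈ t, embOf y.2 w = g w - g [] := by
      rw [embOf_iff ht]
      simp only [hTm]
      exact ⟨fun h w a b => h w ⟨b, a⟩, fun h w a => h w a.2 a.1⟩
    rw [h3, h4]
    constructor
    · intro h
      have h5 : ∀ w, w ∈ t → (w ∈ treeOf y.1 ∧ embOf y.2 w = g w - g []) := by
        intro w hw
        exact (h (w, g w - g [])).1 (Finset.mem_image.2 ⟨w, (hTm w).2 hw, rfl⟩)
      refine ⟨fun w => ⟨fun hw => (h5 w hw).1, fun hw => ?_⟩, fun w hw => (h5 w hw).2⟩
      have := (h (w, embOf y.2 w)).2 ⟨hw, rfl⟩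
      obtain ⟨u, hu, hue⟩ := Finset.mem_image.1 this
      simp only [Prod.mk.injEq] at hue
      rw [← hue.1]; exact (hTm u).1 hu
    · rintro ⟨h5, h6⟩ ⟨w, x⟩
      simp only [Finset.mem_image, Prod.mk.injEq, hTm]
      constructor
      · rintro ⟨u, hu, rfl, rfl⟩
        exact ⟨(h5 u).1 hu, h6 u hu⟩
      · rintro ⟨ha, hb⟩
        have := (h5 w).2 ha
        exact ⟨w, this, rfl, by rw [← hb, h6 w this]⟩
  rw [bushLaw, Measure.map_apply meas_bushOf (by exact trivial), hpre, bushSpaceLaw_eq,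
    Measure.prod_prod, Measure.infinitePi_pi _ (fun _ _ => measurableSet_singleton _),
    Measure.infinitePi_pi _ (fun _ _ => measurableSet_singleton _)]
  congr 1
  · unfold bushWeight
    rw [← Finset.mul_prod_erase T _ hnil]
    congr 1
    · simp only [offLaw, if_true]
      rw [tiltLaw_singleton]
    · have : t \ {([] : List ℕ)} = ((T.erase [] : Finset (List ℕ)) : Set (List ℕ)) := by
        ext w; simp [hTm, and_comm]
      rw [this, finprod_mem_coe_finset]
      refine Finset.prod_congr rfl fun w hw => ?_
      have : w ≠ [] := (Finset.mem_erase.1 hw).1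
      simp only [offLaw, this, if_false]
      rw [PMF.toMeasure_apply_singleton _ _ (measurableSet_singleton _)]
  · rw [Finset.prod_congr rfl (g := fun _ => ((2 * d : ℕ) : ℝ≥0∞)⁻¹)]
    · rw [Finset.prod_const, Finset.card_erase_of_mem hnil]
      congr 2
      rw [Set.ncard_eq_toFinset_card _ hf]
    · intro w hw
      rw [Finset.mem_erase, hTm] at hw
      exact stepLaw_unit _ (hg w hw.2 hw.1)

/-! ### A measure-theoretic lemma -/

lemma null_of_outer {Ω : Type*} [MeasurableSpace Ω] (P : Measure Ω) [IsProbabilityMeasure P]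
    (S : Set Ω) (h : P S + P Sᶜ ≤ 1) : NullMeasurableSet S P := by
  set A := toMeasurable P S
  set B := toMeasurable P Sᶜ
  have hA : MeasurableSet A := measurableSet_toMeasurable _ _
  have hB : MeasurableSet B := measurableSet_toMeasurable _ _
  have hSA : S ⊆ A := subset_toMeasurable _ _
  have hSB : Sᶜ ⊆ B := subset_toMeasurable _ _
  have hu : A ∪ B = univ := by
    ext x; by_cases hx : x ∈ S
    · simp [hSA hx]
    · simp [hSB hx]
  have h1 := measure_union_add_inter A hB (μ := P)
  rw [hu, measure_univ, measure_toMeasurable, measure_toMeasurable] at h1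
  have h2 : P (A ∩ B) = 0 := by
    have h3 : 1 + P (A ∩ B) ≤ 1 + 0 := by rw [h1, add_zero]; exact h
    exact le_antisymm ((ENNReal.add_le_add_iff_left (by simp)).1 h3) (by simp)
  refine ⟨A, hA, ?_⟩
  refine ae_eq_set.2 ⟨?_, ?_⟩
  · rw [Set.diff_eq_empty.2 hSA]; simp
  · have h5 : A \ S ⊆ A ∩ B := fun x hx => ⟨hx.1, hSB hx.2⟩
    exact measure_mono_null h5 h2

lemma law_of_fibers {Ω D : Type*} [MeasurableSpace Ω] (P : Measure Ω) [IsProbabilityMeasure P]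
    [MeasurableSpace D] [DiscreteMeasurableSpace D] [Countable D]
    (ρ : Measure D) [IsProbabilityMeasure ρ] (f : Ω → D)
    (h : ∀ ω, P (f ⁻¹' {f ω}) = ρ {f ω}) :
    AEMeasurable f P ∧ P.map f = ρ := by
  have hle : ∀ c, P (f ⁻¹' {c}) ≤ ρ {c} := by
    intro c
    by_cases hc : ∃ ω, f ω = c
    · obtain ⟨ω, rfl⟩ := hc; exact (h ω).le
    · have : f ⁻¹' {c} = ∅ := by
        ext ω; simp; exact fun h => hc ⟨ω, h⟩
      simp [this]
  have hle2 : ∀ A : Set D, P (f ⁻¹' A) ≤ ρ A := by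
    intro A
    have : f ⁻¹' A = ⋃ c : A, f ⁻¹' {(c : D)} := by
      ext ω; simp
    calc P (f ⁻¹' A) ≤ ∑' c : A, P (f ⁻¹' {(c : D)}) := by
          rw [this]; exact measure_iUnion_le _
      _ ≤ ∑' c : A, ρ {(c : D)} := ENNReal.tsum_le_tsum fun c => hle c
      _ = ρ A := by
        rw [← measure_iUnion]
        · congr 1; ext c; simp
        · intro a b hab
          simpa [Function.onFun, Subtype.ext_iff] using Ne.symm (fun h => hab h.symm)
        · intro _; exact MeasurableSet.of_discrete
  have hsum : ∀ A : Set D, ρ A + ρ Aᶜ = 1 := fun A => by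
    rw [measure_add_measure_compl MeasurableSet.of_discrete, measure_univ]
  have hnull : ∀ A : Set D, NullMeasurableSet (f ⁻¹' A) P := by
    intro A
    refine null_of_outer P _ ?_
    rw [← hsum A]
    exact add_le_add (hle2 A) (hle2 Aᶜ)
  have hae : AEMeasurable f P := by
    have : NullMeasurable f P := fun A _ => hnull A
    exact this.aemeasurable
  refine ⟨hae, ?_⟩
  ext A hA
  rw [Measure.map_apply_of_aemeasurable hae hA]
  refine le_antisymm (hle2 A) ?_
  have h1 : P (f ⁻¹' A) + P (f ⁻¹' A)ᶜ = 1 := by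
    rw [measure_add_measure_compl₀ (hnull A), measure_univ]
  have h2 := hsum A
  have h3 : P (f ⁻¹' A)ᶜ ≤ ρ Aᶜ := hle2 Aᶜ
  have h4 : ρ A + ρ Aᶜ ≤ P (f ⁻¹' A) + ρ Aᶜ := by
    rw [h2, ← h1]; gcongr
  exact (ENNReal.add_le_add_iff_right (measure_ne_top _ _)).1 h4

/-! ### The law of the model -/

instance (d : ℕ) (p : PMF ℕ) (M : BiInfModel d p) : MeasurableSpace M.Ω := M.mΩ
instance (d : ℕ) (p : PMF ℕ) (M : BiInfModel d p) : IsProbabilityMeasure M.P := M.hP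

/-- State space of one backbone index: step, and bush in relative coordinates. -/
abbrev Cell (d : ℕ) := Zd d × Finset (List ℕ × Zd d)

/-- Law of a cell. -/
def cellLaw (d : ℕ) (p : PMF ℕ) : Measure (Cell d) := (stepLaw d).prod (bushLaw d p)

instance (d : ℕ) (p : PMF ℕ) [NeZero d] [Fact (HasMeanOne p)] :
    IsProbabilityMeasure (cellLaw d p) := by
  unfold cellLaw; infer_instance

/-- Law of the sequence of cells. -/
def seqLaw (d : ℕ) (p : PMF ℕ) [NeZero d] [Fact (HasMeanOne p)] : Measure (ℤ → Cell d) :=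
  Measure.infinitePi fun _ => cellLaw d p

instance (d : ℕ) (p : PMF ℕ) [NeZero d] [Fact (HasMeanOne p)] :
    IsProbabilityMeasure (seqLaw d p) := by
  unfold seqLaw; infer_instance

/-- The sequence of cells of a sample. -/
def cells {d : ℕ} {p : PMF ℕ} (M : BiInfModel d p) (ω : M.Ω) (n : ℤ) : Cell d :=
  (M.walk (n + 1) ω - M.walk n ω,
    (M.hbtree n ω).2.toFinset.image fun w => (w, M.bemb n ω w - M.walk n ω))

lemma mem_cells {d : ℕ} {p : PMF ℕ} (M : BiInfModel d p) (ω : M.Ω) (n : ℤ)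
    (e : List ℕ × Zd d) :
    e ∈ (cells M ω n).2 ↔ e.1 ∈ M.btree n ω ∧ M.bemb n ω e.1 = M.walk n ω + e.2 := by
  simp only [cells, Finset.mem_image, Set.Finite.mem_toFinset]
  constructor
  · rintro ⟨w, hw, rfl⟩
    exact ⟨hw, by simp⟩
  · rintro ⟨h1, h2⟩
    exact ⟨e.1, h1, by rw [h2]; simp⟩

lemma cells_fiber {d : ℕ} {p : PMF ℕ} (M : BiInfModel d p) (N : ℕ) (ω₀ ω : M.Ω) :
    (∀ k ∈ Finset.Ico (-(N : ℤ)) N, cells M ω k = cells M ω₀ k) ↔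
    ((∀ k : ℤ, -(N : ℤ) ≤ k → k ≤ (N : ℤ) → M.walk k ω = M.walk k ω₀) ∧
        ∀ m ∈ Finset.Ico (-(N : ℤ)) N, M.btree m ω = M.btree m ω₀ ∧
          ∀ v ∈ M.btree m ω₀, M.bemb m ω v = M.bemb m ω₀ v) := by
  constructor
  · intro h
    have hw : ∀ n : ℕ, n ≤ N → M.walk n ω = M.walk n ω₀ ∧ M.walk (-n) ω = M.walk (-n) ω₀ := by
      intro n
      induction n with
      | zero => intro _; simp [M.hwalk0]
      | succ n ih =>
        intro hn
        obtain ⟨h1, h2⟩ := ih (by omega)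
        have h3 := congrArg Prod.fst (h n (by rw [Finset.mem_Ico]; omega))
        have h4 := congrArg Prod.fst (h (-(n + 1 : ℕ)) (by rw [Finset.mem_Ico]; omega))
        simp only [cells] at h3 h4
        have e : (-((n + 1 : ℕ) : ℤ)) + 1 = -n := by push_cast; ring
        rw [e, h2] at h4
        rw [h1] at h3
        refine ⟨?_, ?_⟩
        · push_cast; exact sub_left_injective h3
        · exact sub_right_injective h4
    have hw' : ∀ k : ℤ, -(N : ℤ) ≤ k → k ≤ (N : ℤ) → M.walk k ω = M.walk k ω₀ := by
      intro k h1 h2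
      rcases le_total 0 k with h3 | h3
      · obtain ⟨n, rfl⟩ := Int.eq_ofNat_of_zero_le h3
        exact (hw n (by omega)).1
      · obtain ⟨n, hn⟩ := Int.eq_ofNat_of_zero_le (show 0 ≤ -k by omega)
        have : k = -n := by omega
        rw [this]
        exact (hw n (by omega)).2
    refine ⟨hw', fun m hm => ?_⟩
    have hc := h m hm
    rw [Finset.mem_Ico] at hm
    have hwm := hw' m hm.1 hm.2.le
    have hsub : ∀ v ∈ M.btree m ω₀, v ∈ M.btree m ω ∧ M.bemb m ω v = M.bemb m ω₀ v := by
      intro v hv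
      have := (mem_cells M ω₀ m (v, M.bemb m ω₀ v - M.walk m ω₀)).2 ⟨hv, by simp⟩
      rw [← hc, mem_cells, hwm] at this
      simpa using this
    refine ⟨Set.Subset.antisymm (fun v hv => ?_) fun v hv => (hsub v hv).1,
      fun v hv => (hsub v hv).2⟩
    have := (mem_cells M ω m (v, M.bemb m ω v - M.walk m ω)).2 ⟨hv, by simp⟩
    rw [hc, mem_cells] at this
    exact this.1
  · rintro ⟨h1, h2⟩ k hk
    obtain ⟨h3, h4⟩ := h2 k hk
    rw [Finset.mem_Ico] at hk
    refine Prod.ext ?_ ?_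
    · simp only [cells]
      rw [h1 k hk.1 hk.2.le, h1 (k + 1) (by omega) (by omega)]
    · ext e
      rw [mem_cells, mem_cells, h3, h1 k hk.1 hk.2.le]
      constructor
      · rintro ⟨a, b⟩; exact ⟨a, by rw [← h4 _ a, b]⟩
      · rintro ⟨a, b⟩; exact ⟨a, by rw [h4 _ a, b]⟩

lemma cellLaw_cells {d : ℕ} {p : PMF ℕ} [NeZero d] [Fact (HasMeanOne p)]
    (M : BiInfModel d p) (ω : M.Ω) (n : ℤ) :
    cellLaw d p {cells M ω n} = ((2 * d : ℕ) : ℝ≥0∞)⁻¹ *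
      (bushWeight p (M.btree n ω) *
        ((2 * d : ℕ) : ℝ≥0∞)⁻¹ ^ ((M.btree n ω).ncard - 1)) := by
  rw [cellLaw, ← Prod.mk.eta (p := cells M ω n), ← Set.singleton_prod_singleton,
    Measure.prod_prod]
  congr 1
  · exact stepLaw_unit _ (M.hstep n ω)
  · rw [← bushLaw_singleton p (M.hbtree n ω).1 (M.hbtree n ω).2 _ (M.hbemb n ω), M.hbroot]
    rfl

lemma cells_fin_law {d : ℕ} {p : PMF ℕ} [NeZero d] [Fact (HasMeanOne p)]
    (M : BiInfModel d p) (N : ℕ) :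
    AEMeasurable (fun ω => (Finset.Ico (-(N : ℤ)) N).restrict (cells M ω)) M.P ∧
      M.P.map (fun ω => (Finset.Ico (-(N : ℤ)) N).restrict (cells M ω)) =
        Measure.pi fun _ => cellLaw d p := by
  refine law_of_fibers M.P _ _ fun ω₀ => ?_
  have hl := M.hlaw N (fun k => M.walk k ω₀) (M.hwalk0 ω₀) (fun k _ _ => M.hstep k ω₀)
    (Finset.Ico (-(N : ℤ)) N) (fun m hm => by rw [Finset.mem_Ico] at hm; omega)
    (fun m => M.btree m ω₀) (fun m _ => M.hbtree m ω₀) (fun m => M.bemb m ω₀)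
    (fun m _ => ⟨M.hbroot m ω₀, M.hbemb m ω₀⟩)
  have e : (fun ω => (Finset.Ico (-(N : ℤ)) N).restrict (cells M ω)) ⁻¹'
      {(Finset.Ico (-(N : ℤ)) N).restrict (cells M ω₀)} =
      {ω | (∀ k : ℤ, -(N : ℤ) ≤ k → k ≤ (N : ℤ) → M.walk k ω = M.walk k ω₀) ∧
        ∀ m ∈ Finset.Ico (-(N : ℤ)) N, M.btree m ω = M.btree m ω₀ ∧
          ∀ v ∈ M.btree m ω₀, M.bemb m ω v = M.bemb m ω₀ v} := by
    ext ω
    have := cells_fiber M N ω₀ ω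
    rw [mem_ofPred_eq, ← this]
    simp only [mem_preimage, mem_singleton_iff, funext_iff, Subtype.forall]
    rfl
  rw [e]
  refine hl.trans ?_
  rw [Measure.pi_singleton]
  simp only [Finset.restrict, cellLaw_cells]
  have hpc : ∀ (J : Finset ℤ) (c : ℝ≥0∞) (w : ℤ → ℝ≥0∞),
      ∏ i ∈ J, c * w i = c ^ J.card * ∏ i ∈ J, w i := fun J c w => by
    rw [Finset.prod_mul_distrib, Finset.prod_const]
  rw [Finset.prod_coe_sort (Finset.Ico (-(N : ℤ)) N) (fun i => ((2 * d : ℕ) : ℝ≥0∞)⁻¹ *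
      (bushWeight p (M.btree i ω₀) *
        ((2 * d : ℕ) : ℝ≥0∞)⁻¹ ^ ((M.btree i ω₀).ncard - 1))), hpc]
  have hcard : (Finset.Ico (-(N : ℤ)) N).card = 2 * N := by
    simp; omega
  rw [hcard]

lemma cells_law {d : ℕ} {p : PMF ℕ} [NeZero d] [Fact (HasMeanOne p)]
    (M : BiInfModel d p) :
    AEMeasurable (cells M) M.P ∧ M.P.map (cells M) = seqLaw d p := by
  have hae : AEMeasurable (cells M) M.P := by
    refine aemeasurable_pi_iff.2 fun k => ?_
    have h := (cells_fin_law M (k.natAbs + 1)).1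
    have h2 := aemeasurable_pi_iff.1 h ⟨k, by rw [Finset.mem_Ico]; omega⟩
    exact h2
  refine ⟨hae, ?_⟩
  unfold seqLaw
  refine Measure.eq_infinitePi _ fun s t ht => ?_
  obtain ⟨N, hN⟩ : ∃ N : ℕ, s ⊆ Finset.Ico (-(N : ℤ)) N := by
    refine ⟨s.sup (fun k => k.natAbs + 1), fun k hk => ?_⟩
    have : k.natAbs + 1 ≤ s.sup (fun k => k.natAbs + 1) :=
      Finset.le_sup (f := fun k : ℤ => k.natAbs + 1) hk
    rw [Finset.mem_Ico]
    omega
  set J := Finset.Ico (-(N : ℤ)) N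
  have hbox : MeasurableSet ((s : Set ℤ).pi t) := .pi s.countable_toSet fun _ _ => ht _
  have h1 : ((s : Set ℤ).pi t) = J.restrict ⁻¹' {y : J → Cell d | ∀ k (hk : k ∈ s),
      y ⟨k, hN hk⟩ ∈ t k} := by
    ext x; simp [Set.mem_pi, Finset.restrict]
  have hm : MeasurableSet {y : J → Cell d | ∀ k (hk : k ∈ s), y ⟨k, hN hk⟩ ∈ t k} :=
    MeasurableSet.of_discrete
  rw [Measure.map_apply_of_aemeasurable hae hbox]
  rw [← Measure.infinitePi_pi (μ := fun _ => cellLaw d p) (s := s) (t := t) (fun i _ => ht i)]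
  rw [h1, ← preimage_comp]
  have h2 := cells_fin_law M N
  rw [← Measure.map_apply (Finset.measurable_restrict _) hm, Measure.infinitePi_map_restrict,
    ← h2.2, Measure.map_apply_of_aemeasurable h2.1 hm]
  rfl

/-! ### Steps and bushes separately -/

lemma seqLaw_eq_map (d : ℕ) (p : PMF ℕ) [NeZero d] [Fact (HasMeanOne p)] :
    ((Measure.infinitePi fun _ : ℤ => stepLaw d).prod
      (Measure.infinitePi fun _ : ℤ => bushLaw d p)).map
        (fun y => (fun k => (y.1 k, y.2 k) : ℤ → Cell d)) = seqLaw d p := by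
  have hm : Measurable (fun y : (ℤ → Zd d) × (ℤ → Finset (List ℕ × Zd d)) =>
      (fun k => (y.1 k, y.2 k) : ℤ → Cell d)) := by fun_prop
  unfold seqLaw
  refine IsProjectiveLimit.unique (P := fun J : Finset ℤ => Measure.pi fun _ : J => cellLaw d p)
    ?_ (Measure.isProjectiveLimit_infinitePi _)
  intro I
  refine Measure.ext_of_singleton fun c => ?_
  rw [Measure.map_apply (Finset.measurable_restrict _) (MeasurableSet.singleton _),
    Measure.map_apply hm ((Finset.measurable_restrict _) (MeasurableSet.singleton _)),
    Measure.pi_singleton]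
  classical
  have e : (fun y : (ℤ → Zd d) × (ℤ → Finset (List ℕ × Zd d)) =>
      (fun k => (y.1 k, y.2 k) : ℤ → Cell d)) ⁻¹' (I.restrict ⁻¹' {c}) =
      ((I : Set ℤ).pi fun k => if h : k ∈ I then {(c ⟨k, h⟩).1} else univ) ×ˢ
      ((I : Set ℤ).pi fun k => if h : k ∈ I then {(c ⟨k, h⟩).2} else univ) := by
    ext y
    simp only [mem_preimage, mem_singleton_iff, funext_iff, Finset.restrict, Subtype.forall,
      mem_prod, Set.mem_pi, Finset.mem_coe, Prod.ext_iff]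
    constructor
    · intro h
      exact ⟨fun k hk => by simp [hk, funext (h k hk).1], fun k hk => by simp [hk, (h k hk).2]⟩
    · rintro ⟨h1, h2⟩ k hk
      have h3 := h1 k hk
      have h4 := h2 k hk
      simp only [hk, dite_true, mem_singleton_iff] at h3 h4
      exact ⟨congrFun h3, h4⟩
  rw [e, Measure.prod_prod, Measure.infinitePi_pi _ (fun _ _ => MeasurableSet.of_discrete),
    Measure.infinitePi_pi _ (fun _ _ => MeasurableSet.of_discrete), ← Finset.prod_mul_distrib,
    ← Finset.prod_coe_sort]
  refine Finset.prod_congr rfl fun k _ => ?_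
  simp only [k.2, dite_true]
  rw [cellLaw, ← Prod.mk.eta (p := c k), ← Set.singleton_prod_singleton, Measure.prod_prod]

/-- Bushes `m` and `m + l` intersect. -/
def IntE {d : ℕ} (x : ℤ → Cell d) (m : ℤ) (l : ℕ) : Prop :=
  ∃ e ∈ (x m).2, ∃ e' ∈ (x (m + l)).2, e.2 = (∑ k : Fin l, (x (m + (k : ℕ))).1) + e'.2

lemma event_bound {d : ℕ} (p : PMF ℕ) [NeZero d] [Fact (HasMeanOne p)] (m : ℤ) (l : ℕ)
    (hl : 1 ≤ l) (u v : List ℕ) (X z Y : Zd d) :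
    seqLaw d p {x | (u, X) ∈ (x m).2 ∧ (v, Y) ∈ (x (m + l)).2 ∧
      ∑ k : Fin l, (x (m + (k : ℕ))).1 = z} ≤
    wordWeight p u * srwQ d u.length X * (wordWeight p v * srwQ d v.length Y) * srwQ d l z := by
  classical
  rw [← seqLaw_eq_map, Measure.map_apply (by fun_prop)]
  · have e : (fun y : (ℤ → Zd d) × (ℤ → Finset (List ℕ × Zd d)) =>
        (fun k => (y.1 k, y.2 k) : ℤ → Cell d)) ⁻¹' {x | (u, X) ∈ (x m).2 ∧
        (v, Y) ∈ (x (m + l)).2 ∧ ∑ k : Fin l, (x (m + (k : ℕ))).1 = z} =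
        {y | ∑ k : Fin l, y (m + (k : ℕ)) = z} ×ˢ
        ((({m, m + l} : Finset ℤ) : Set ℤ).pi
          fun k => if k = m then {b | (u, X) ∈ b} else {b | (v, Y) ∈ b}) := by
      ext y
      have : m + (l : ℤ) ≠ m := by omega
      simp [this, and_comm, and_assoc]
    rw [e, Measure.prod_prod, infinitePi_step_sum l (fun k : Fin l => m + ((k : ℕ) : ℤ)),
      Measure.infinitePi_pi _ (fun _ _ => MeasurableSet.of_discrete),
      Finset.prod_pair (by omega), mul_comm]
    · have : m + (l : ℤ) ≠ m := by omega
      simp only [this, if_true, if_false]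
      gcongr
      · exact bushLaw_mem_le ..
      · exact bushLaw_mem_le ..
    · intro a b hab
      simp at hab; omega
  · refine MeasurableSet.inter ?_ (MeasurableSet.inter ?_ ?_)
    · exact (show Measurable fun x : ℤ → Cell d => (x m).2 by fun_prop)
        (MeasurableSet.of_discrete (s := {b | (u, X) ∈ b}))
    · exact (show Measurable fun x : ℤ → Cell d => (x (m + l)).2 by fun_prop)
        (MeasurableSet.of_discrete (s := {b | (v, Y) ∈ b}))
    · exact measurableSet_eq_fun (by fun_prop) measurable_const

/-- The bush constant. -/
def bushC (p : PMF ℕ) : ℝ≥0∞ := 1 + ∑' j : ℕ, tiltLaw p (Ioi j)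

lemma IntE_bound {d : ℕ} (p : PMF ℕ) [NeZero d] [hm : Fact (HasMeanOne p)] (m : ℤ) (l : ℕ)
    (hl : 1 ≤ l) :
    seqLaw d p {x | IntE x m l} ≤ bushC p * (bushC p * ∑' a : ℕ, ∑' b : ℕ, srwQ d (a + l + b) 0) := by
  have hsub : {x : ℤ → Cell d | IntE x m l} ⊆ ⋃ (u : List ℕ), ⋃ (v : List ℕ), ⋃ (X : Zd d),
      ⋃ (z : Zd d), ⋃ (Y : Zd d), {x | X = z + Y ∧ (u, X) ∈ (x m).2 ∧ (v, Y) ∈ (x (m + l)).2 ∧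
      ∑ k : Fin l, (x (m + (k : ℕ))).1 = z} := by
    rintro x ⟨⟨u, X⟩, he, ⟨v, Y⟩, he', h⟩
    simp only [mem_iUnion]
    exact ⟨u, v, X, _, Y, h, he, he', rfl⟩
  calc seqLaw d p {x | IntE x m l}
      ≤ ∑' (u : List ℕ), ∑' (v : List ℕ), ∑' (X : Zd d), ∑' (z : Zd d), ∑' (Y : Zd d),
        seqLaw d p {x | X = z + Y ∧ (u, X) ∈ (x m).2 ∧ (v, Y) ∈ (x (m + l)).2 ∧
          ∑ k : Fin l, (x (m + (k : ℕ))).1 = z} := by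
        refine (measure_mono hsub).trans ?_
        refine (measure_iUnion_le _).trans (ENNReal.tsum_le_tsum fun u => ?_)
        refine (measure_iUnion_le _).trans (ENNReal.tsum_le_tsum fun v => ?_)
        refine (measure_iUnion_le _).trans (ENNReal.tsum_le_tsum fun X => ?_)
        refine (measure_iUnion_le _).trans (ENNReal.tsum_le_tsum fun z => ?_)
        exact measure_iUnion_le _
    _ ≤ ∑' (u : List ℕ), ∑' (v : List ℕ), ∑' (X : Zd d), ∑' (z : Zd d), ∑' (Y : Zd d),
        wordWeight p u * (wordWeight p v * (if X = z + Y then srwQ d u.length X *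
          srwQ d v.length Y * srwQ d l z else 0)) := by
        refine ENNReal.tsum_le_tsum fun u => ENNReal.tsum_le_tsum fun v =>
          ENNReal.tsum_le_tsum fun X => ENNReal.tsum_le_tsum fun z =>
          ENNReal.tsum_le_tsum fun Y => ?_
        by_cases h : X = z + Y
        · rw [if_pos h]
          have h1 := event_bound p m l hl u v X z Y
          refine (measure_mono ?_).trans (h1.trans (le_of_eq (by ring)))
          rintro x ⟨_, h2⟩; exact h2
        · simp [h]
    _ = ∑' (u : List ℕ), wordWeight p u * ∑' (v : List ℕ), wordWeight p v *
          srwQ d (u.length + l + v.length) 0 := by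
        refine tsum_congr fun u => ?_
        simp only [ENNReal.tsum_mul_left]
        refine congrArg _ (tsum_congr fun v => ?_)
        rw [← srwQ_three]
    _ ≤ ∑' (u : List ℕ), wordWeight p u * (bushC p * ∑' b, srwQ d (u.length + l + b) 0) := by
        refine ENNReal.tsum_le_tsum fun u => ?_
        gcongr
        exact tsum_wordWeight p hm.out fun b => srwQ d (u.length + l + b) 0
    _ ≤ _ := by
        refine (tsum_wordWeight p hm.out
          fun a => bushC p * ∑' b, srwQ d (a + l + b) 0).trans (le_of_eq ?_)
        rw [ENNReal.tsum_mul_left]; rfl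

/-! ### Polynomial tails -/

lemma rpow_diff {r s : ℝ} (hr : 1 ≤ r) (hs : 1 < s) :
    (s - 1) * (r + 1) ^ (-s) ≤ r ^ (1 - s) - (r + 1) ^ (1 - s) := by
  have h0 : 0 < r := by linarith
  have h1 : 0 < r + 1 := by linarith
  have hu : 0 < r / (r + 1) := by positivity
  have h2 : 1 + (s - 1) * (1 / (r + 1)) ≤ (r / (r + 1)) ^ (1 - s) := by
    rw [Real.rpow_def_of_pos hu]
    have h3 := Real.add_one_le_exp (Real.log (r / (r + 1)) * (1 - s))
    have h4 := Real.log_le_sub_one_of_pos hu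
    have h5 : r / (r + 1) - 1 = - (1 / (r + 1)) := by field_simp; ring
    rw [h5] at h4
    nlinarith
  rw [Real.div_rpow h0.le h1.le] at h2
  have h6 : 0 < (r + 1) ^ (1 - s) := Real.rpow_pos_of_pos h1 _
  rw [le_div_iff₀ h6] at h2
  have h7 : (r + 1) ^ (-s) = (r + 1) ^ (1 - s) * (1 / (r + 1)) := by
    rw [show -s = (1 - s) - 1 by ring, Real.rpow_sub_one h1.ne']; ring
  rw [h7]
  nlinarith

lemma rpow_tail {s : ℝ} (hs : 1 < s) : ∃ C : ℝ, 0 < C ∧ ∀ r : ℕ, 1 ≤ r →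
    ∑' a : ℕ, ENNReal.ofReal (((r + a : ℕ) : ℝ) ^ (-s)) ≤
      ENNReal.ofReal C * ENNReal.ofReal ((r : ℝ) ^ (1 - s)) := by
  refine ⟨2 ^ s / (s - 1), div_pos (by positivity) (by linarith), fun r hr => ?_⟩
  have hs1 : 0 < s - 1 := by linarith
  have key : ∀ t : ℝ, 1 ≤ t → t ^ (-s) ≤ 2 ^ s / (s - 1) * (t ^ (1 - s) - (t + 1) ^ (1 - s)) := by
    intro t ht
    have h1 := rpow_diff ht hs
    have h2 : t ^ (-s) ≤ 2 ^ s * (t + 1) ^ (-s) := by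
      have h3 : (2 * t) ^ (-s) ≤ (t + 1) ^ (-s) :=
        Real.rpow_le_rpow_of_nonpos (by linarith) (by linarith) (by linarith)
      rw [Real.mul_rpow (by norm_num) (by linarith)] at h3
      have h4 : (2 : ℝ) ^ s * 2 ^ (-s) = 1 := by
        rw [← Real.rpow_add (by norm_num)]; simp
      calc t ^ (-s) = (2 : ℝ) ^ s * (2 ^ (-s) * t ^ (-s)) := by rw [← mul_assoc, h4, one_mul]
        _ ≤ _ := by gcongr
    calc t ^ (-s) ≤ 2 ^ s * (t + 1) ^ (-s) := h2
      _ = 2 ^ s / (s - 1) * ((s - 1) * (t + 1) ^ (-s)) := by field_simp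
      _ ≤ _ := by gcongr
  have hfin : ∀ N : ℕ, ∑ a ∈ Finset.range N, ((r + a : ℕ) : ℝ) ^ (-s) ≤
      2 ^ s / (s - 1) * ((r : ℝ) ^ (1 - s) - ((r + N : ℕ) : ℝ) ^ (1 - s)) := by
    intro N
    induction N with
    | zero => simp
    | succ N ih =>
      rw [Finset.sum_range_succ]
      have h1 := key ((r + N : ℕ) : ℝ) (by exact_mod_cast (by omega : 1 ≤ r + N))
      have e : ((r + (N + 1) : ℕ) : ℝ) = ((r + N : ℕ) : ℝ) + 1 := by push_cast; ring
      rw [e]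
      linarith
  refine ENNReal.tsum_le_of_sum_range_le fun N => ?_
  rw [← ENNReal.ofReal_sum_of_nonneg (fun _ _ => by positivity), ← ENNReal.ofReal_mul
    (by positivity)]
  refine ENNReal.ofReal_le_ofReal ((hfin N).trans ?_)
  have h5 : 0 ≤ ((r + N : ℕ) : ℝ) ^ (1 - s) := by positivity
  have h6 : 0 ≤ (2 : ℝ) ^ s / (s - 1) := by positivity
  nlinarith

lemma tail_iter {s : ℝ} (hs : 1 < s) (f : ℕ → ℝ≥0∞) (C : ℝ≥0∞) (hC : C ≠ ⊤)
    (hf : ∀ r, 1 ≤ r → f r ≤ C * ENNReal.ofReal ((r : ℝ) ^ (-s))) :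
    ∃ C' : ℝ≥0∞, C' ≠ ⊤ ∧ ∀ r, 1 ≤ r → ∑' a : ℕ, f (r + a) ≤
      C' * ENNReal.ofReal ((r : ℝ) ^ (-(s - 1))) := by
  obtain ⟨D, hD, h⟩ := rpow_tail hs
  refine ⟨C * ENNReal.ofReal D, by finiteness, fun r hr => ?_⟩
  calc ∑' a : ℕ, f (r + a) ≤ ∑' a : ℕ, C * ENNReal.ofReal (((r + a : ℕ) : ℝ) ^ (-s)) :=
        ENNReal.tsum_le_tsum fun a => hf _ (by omega)
    _ ≤ C * (ENNReal.ofReal D * ENNReal.ofReal ((r : ℝ) ^ (1 - s))) := by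
        rw [ENNReal.tsum_mul_left]
        gcongr
        exact h r hr
    _ = _ := by rw [neg_sub, mul_assoc]

/-- There is an intersection across a gap of length at least `n`. -/
def Far {d : ℕ} (x : ℤ → Cell d) (m : ℤ) (n : ℕ) : Prop :=
  ∃ a b : ℕ, IntE x (m - a) (n + a + b)

lemma Far_bound {d : ℕ} (hd : 10 < d) (p : PMF ℕ) [NeZero d] [hm : Fact (HasMeanOne p)]
    (hsq : FiniteSecondMoment p) :
    ∃ C : ℝ≥0∞, C ≠ ⊤ ∧ ∀ (m : ℤ) (n : ℕ), 1 ≤ n →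
      seqLaw d p {x | Far x m n} ≤ C * ENNReal.ofReal ((n : ℝ) ^ (-(((d : ℝ) - 8) / 2))) := by
  obtain ⟨C0, hC0, h0⟩ := srwR_bound d (by omega)
  have hd' : (11 : ℝ) ≤ d := by exact_mod_cast hd
  have hB : bushC p ≠ ⊤ := by
    have := tsum_tail_tilt p hsq
    unfold bushC; finiteness
  obtain ⟨C1, hC1, h1⟩ := tail_iter (s := (d : ℝ) / 2) (by linarith) (fun l => srwQ d l 0)
    (ENNReal.ofReal C0) (by finiteness) (fun r hr => by
      rw [srwQ_eq (d := d) (by omega), ← ENNReal.ofReal_mul hC0.le]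
      exact ENNReal.ofReal_le_ofReal (h0 r hr))
  obtain ⟨C2, hC2, h2⟩ := tail_iter (s := (d : ℝ) / 2 - 1) (by linarith) _ C1 hC1 h1
  have h2' : ∀ r, 1 ≤ r → bushC p * (bushC p * ∑' a : ℕ, ∑' b : ℕ, srwQ d (r + a + b) 0) ≤
      (bushC p * bushC p * C2) * ENNReal.ofReal ((r : ℝ) ^ (-((d : ℝ) / 2 - 1 - 1))) := by
    intro r hr
    rw [← mul_assoc, mul_assoc _ C2]
    gcongr
    exact h2 r hr
  obtain ⟨C3, hC3, h3⟩ := tail_iter (s := (d : ℝ) / 2 - 1 - 1) (by linarith) _ _ (by finiteness) h2'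
  obtain ⟨C4, hC4, h4⟩ := tail_iter (s := (d : ℝ) / 2 - 1 - 1 - 1) (by linarith) _ _ hC3 h3
  refine ⟨C4, hC4, fun m n hn => ?_⟩
  have h5 := h4 n hn
  have e : -((d : ℝ) / 2 - 1 - 1 - 1 - 1) = -(((d : ℝ) - 8) / 2) := by ring
  rw [e] at h5
  refine le_trans ?_ h5
  have hsub : {x : ℤ → Cell d | Far x m n} = ⋃ a : ℕ, ⋃ b : ℕ, {x | IntE x (m - a) (n + a + b)} := by
    ext x; simp [Far]
  rw [hsub]
  refine (measure_iUnion_le _).trans (ENNReal.tsum_le_tsum fun a => ?_)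
  refine (measure_iUnion_le _).trans (ENNReal.tsum_le_tsum fun b => ?_)
  refine (IntE_bound p _ _ (by omega)).trans (le_of_eq ?_)
  simp only [add_comm, add_left_comm]

/-! ### Pivotal indices of a sequence of cells -/

/-- `j` is a pivotal index. -/
def IsT {d : ℕ} (x : ℤ → Cell d) (j : ℤ) : Prop :=
  ∀ a b : ℕ, ¬ IntE x (j - a) (a + b + 1)

/-- Shift of a sequence. -/
def shiftS {d : ℕ} (g : ℤ) (x : ℤ → Cell d) : ℤ → Cell d := fun k => x (k + g)

lemma IntE_shift {d : ℕ} (g : ℤ) (x : ℤ → Cell d) (m : ℤ) (l : ℕ) :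
    IntE (shiftS g x) m l ↔ IntE x (m + g) l := by
  simp only [IntE, shiftS]
  have e : ∀ k : ℤ, m + k + g = m + g + k := fun k => by ring
  simp only [e]

lemma IsT_shift {d : ℕ} (g : ℤ) (x : ℤ → Cell d) (j : ℤ) :
    IsT (shiftS g x) j ↔ IsT x (j + g) := by
  simp only [IsT, IntE_shift]
  have e : ∀ a : ℕ, j - a + g = j + g - a := fun a => by ring
  simp only [e]

lemma meas_shift {d : ℕ} (g : ℤ) : Measurable (shiftS (d := d) g) := by
  unfold shiftS; fun_prop

lemma seqLaw_shift {d : ℕ} (p : PMF ℕ) [NeZero d] [Fact (HasMeanOne p)] (g : ℤ)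
    {A : Set (ℤ → Cell d)} (hA : MeasurableSet A) :
    seqLaw d p (shiftS g ⁻¹' A) = seqLaw d p A := by
  have h := Measure.map_infinitePi_infinitePi_of_inj (P := fun _ : ℤ => cellLaw d p)
    (f := fun k : ℤ => k + g) (add_left_injective g)
  rw [← Measure.map_apply (meas_shift g) hA]
  unfold seqLaw shiftS
  rw [h]

lemma meas_IntE {d : ℕ} (m : ℤ) (l : ℕ) : MeasurableSet {x : ℤ → Cell d | IntE x m l} := by
  have h : Measurable fun x : ℤ → Cell d => ((x m).2, (x (m + l)).2,
      ∑ k : Fin l, (x (m + (k : ℕ))).1) := by fun_prop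
  exact h (MeasurableSet.of_discrete (s := {y : Finset (List ℕ × Zd d) ×
    Finset (List ℕ × Zd d) × Zd d | ∃ e ∈ y.1, ∃ e' ∈ y.2.1, e.2 = y.2.2 + e'.2}))

lemma meas_IsT {d : ℕ} (j : ℤ) : MeasurableSet {x : ℤ → Cell d | IsT x j} := by
  simp only [IsT, ofPred_forall]
  exact MeasurableSet.iInter fun a => MeasurableSet.iInter fun b => (meas_IntE _ _).compl

/-- No pivotal index strictly between `a` and `b`. -/
def Gap {d : ℕ} (x : ℤ → Cell d) (a b : ℤ) : Prop := ∀ j, a < j → j < b → ¬ IsT x j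

lemma meas_Gap {d : ℕ} (a b : ℤ) : MeasurableSet {x : ℤ → Cell d | Gap x a b} := by
  simp only [Gap, ofPred_forall]
  exact MeasurableSet.iInter fun j => MeasurableSet.iInter fun _ => MeasurableSet.iInter fun _ =>
    (meas_IsT _).compl

lemma Gap_shift {d : ℕ} (g : ℤ) (x : ℤ → Cell d) (a b : ℤ) :
    Gap (shiftS g x) a b ↔ Gap x (a + g) (b + g) := by
  simp only [Gap, IsT_shift]
  constructor
  · intro h j h1 h2
    have := h (j - g) (by omega) (by omega)
    simpa using this
  · intro h j h1 h2
    exact h (j + g) (by omega) (by omega)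

open Classical in
/-- Signed number of pivotal indices between `a` and `b`. -/
def cntT {d : ℕ} (x : ℤ → Cell d) (a b : ℤ) : ℤ :=
  ∑ j ∈ Finset.Ioc a b, (if IsT x j then 1 else 0) -
    ∑ j ∈ Finset.Ioc b a, (if IsT x j then 1 else 0)

lemma meas_cntT {d : ℕ} (a b i : ℤ) : MeasurableSet {x : ℤ → Cell d | cntT x a b = i} := by
  have h : Measurable fun x : ℤ → Cell d => cntT x a b := by
    unfold cntT
    refine Measurable.sub ?_ ?_
    · refine Finset.measurable_sum _ fun j _ => ?_
      exact Measurable.ite (meas_IsT j) measurable_const measurable_const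
    · refine Finset.measurable_sum _ fun j _ => ?_
      exact Measurable.ite (meas_IsT j) measurable_const measurable_const
  exact h (MeasurableSet.singleton i)

lemma cntT_shift {d : ℕ} (g : ℤ) (x : ℤ → Cell d) (a b : ℤ) :
    cntT (shiftS g x) a b = cntT x (a + g) (b + g) := by
  classical
  have key : ∀ a b : ℤ, ∑ j ∈ Finset.Ioc a b, (if IsT (shiftS g x) j then (1 : ℤ) else 0) =
      ∑ j ∈ Finset.Ioc (a + g) (b + g), (if IsT x j then 1 else 0) := by
    intro a b
    refine Finset.sum_bij (fun j _ => j + g) ?_ ?_ ?_ ?_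
    · intro j hj; simp only [Finset.mem_Ioc] at *; omega
    · intro j _ k _ h; simpa using h
    · intro j hj
      refine ⟨j - g, ?_, by simp⟩
      simp only [Finset.mem_Ioc] at *; omega
    · intro j _; simp only [IsT_shift]
  unfold cntT
  rw [key, key]

lemma cntT_strict {d : ℕ} (x : ℤ → Cell d) {a a' b : ℤ} (h : a < a') (ha : IsT x a') :
    cntT x a' b < cntT x a b := by
  classical
  unfold cntT
  have hnn : ∀ j, (0 : ℤ) ≤ (if IsT x j then 1 else 0) := fun j => by split_ifs <;> norm_num
  have h1 : ∑ j ∈ Finset.Ioc a' b, (if IsT x j then (1 : ℤ) else 0) ≤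
      ∑ j ∈ Finset.Ioc a b, (if IsT x j then 1 else 0) :=
    Finset.sum_le_sum_of_subset_of_nonneg (Finset.Ioc_subset_Ioc_left h.le) fun j _ _ => hnn j
  have h2 : ∑ j ∈ Finset.Ioc b a, (if IsT x j then (1 : ℤ) else 0) ≤
      ∑ j ∈ Finset.Ioc b a', (if IsT x j then 1 else 0) :=
    Finset.sum_le_sum_of_subset_of_nonneg (Finset.Ioc_subset_Ioc_right h.le) fun j _ _ => hnn j
  rcases le_or_gt a' b with h3 | h3
  · have h4 : ∑ j ∈ Finset.Ioc a' b, (if IsT x j then (1 : ℤ) else 0) <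
        ∑ j ∈ Finset.Ioc a b, (if IsT x j then 1 else 0) :=
      Finset.sum_lt_sum_of_subset (i := a') (Finset.Ioc_subset_Ioc_left h.le)
        (by rw [Finset.mem_Ioc]; omega) (by simp) (by simp [ha]) fun j _ _ => hnn j
    linarith
  · have h4 : ∑ j ∈ Finset.Ioc b a, (if IsT x j then (1 : ℤ) else 0) <
        ∑ j ∈ Finset.Ioc b a', (if IsT x j then 1 else 0) :=
      Finset.sum_lt_sum_of_subset (i := a') (Finset.Ioc_subset_Ioc_right h.le)
        (by rw [Finset.mem_Ioc]; omega) (by rw [Finset.mem_Ioc]; omega) (by simp [ha])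
        fun j _ _ => hnn j
    linarith

lemma cntT_enum {d : ℕ} (x : ℤ → Cell d) (f : ℤ → ℤ) (hf : StrictMono f)
    (h1 : ∀ i, IsT x (f i)) (h2 : ∀ j, IsT x j → ∃ i, f i = j) (i : ℤ) :
    cntT x (f 0) (f i) = i := by
  classical
  have key : ∀ a b : ℤ, ∑ j ∈ Finset.Ioc (f a) (f b), (if IsT x j then (1 : ℤ) else 0) =
      ((b - a).toNat : ℤ) := by
    intro a b
    rw [← Int.card_Ioc, ← Finset.sum_filter, Finset.sum_const, nsmul_eq_mul, mul_one]
    congr 1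
    refine (Finset.card_bij (fun j _ => f j) ?_ ?_ ?_).symm
    · intro j hj
      rw [Finset.mem_Ioc] at hj
      rw [Finset.mem_filter, Finset.mem_Ioc]
      exact ⟨⟨hf hj.1, hf.monotone hj.2⟩, h1 j⟩
    · intro j _ k _ h; exact hf.injective h
    · intro j hj
      rw [Finset.mem_filter, Finset.mem_Ioc] at hj
      obtain ⟨k, rfl⟩ := h2 j hj.2
      refine ⟨k, ?_, rfl⟩
      rw [Finset.mem_Ioc]
      exact ⟨hf.lt_iff_lt.1 hj.1.1, hf.le_iff_le.1 hj.1.2⟩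
  unfold cntT
  rw [key, key]
  omega

/-! ### Translation of the model -/

lemma walk_add {d : ℕ} {p : PMF ℕ} (M : BiInfModel d p) (ω : M.Ω) (m : ℤ) (l : ℕ) :
    M.walk (m + l) ω = M.walk m ω + ∑ k : Fin l, (cells M ω (m + (k : ℕ))).1 := by
  induction l with
  | zero => simp
  | succ l ih =>
    rw [Fin.sum_univ_castSucc]
    simp only [Fin.val_castSucc, Fin.val_last]
    rw [← add_assoc, ← ih]
    simp only [cells]
    push_cast
    rw [← add_assoc]
    simp

lemma IntE_cells {d : ℕ} {p : PMF ℕ} (M : BiInfModel d p) (ω : M.Ω) (m : ℤ) (l : ℕ) :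
    IntE (cells M ω) m l ↔
      ∃ y, y ∈ M.bemb m ω '' M.btree m ω ∧ y ∈ M.bemb (m + l) ω '' M.btree (m + l) ω := by
  constructor
  · rintro ⟨e, he, e', he', h⟩
    rw [mem_cells] at he he'
    refine ⟨M.bemb m ω e.1, ⟨e.1, he.1, rfl⟩, ⟨e'.1, he'.1, ?_⟩⟩
    rw [he.2, he'.2, h, walk_add, add_assoc]
  · rintro ⟨y, ⟨u, hu, rfl⟩, ⟨v, hv, h⟩⟩
    refine ⟨(u, M.bemb m ω u - M.walk m ω), ?_,
      (v, M.bemb (m + l) ω v - M.walk (m + l) ω), ?_, ?_⟩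
    · rw [mem_cells]; exact ⟨hu, by simp⟩
    · rw [mem_cells]; exact ⟨hv, by simp⟩
    · simp only
      rw [h, walk_add]; abel

lemma IsT_cells {d : ℕ} {p : PMF ℕ} (M : BiInfModel d p) (ω : M.Ω) (j : ℤ) :
    IsT (cells M ω) j ↔ (⋃ n ∈ Set.Iic j, M.bemb n ω '' M.btree n ω) ∩
        (⋃ n ∈ Set.Ici (j + 1), M.bemb n ω '' M.btree n ω) = ∅ := by
  rw [Set.eq_empty_iff_forall_notMem]
  constructor
  · rintro h y ⟨h1, h2⟩
    simp only [mem_iUnion, Set.mem_Iic, Set.mem_Ici] at h1 h2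
    obtain ⟨m, hm, hy⟩ := h1
    obtain ⟨n, hn, hy'⟩ := h2
    obtain ⟨a, ha⟩ := Int.eq_ofNat_of_zero_le (show 0 ≤ j - m by omega)
    obtain ⟨b, hb⟩ := Int.eq_ofNat_of_zero_le (show 0 ≤ n - (j + 1) by omega)
    refine h a b ((IntE_cells M ω _ _).2 ⟨y, ?_, ?_⟩)
    · rwa [show j - a = m by omega]
    · rwa [show j - a + ((a + b + 1 : ℕ) : ℤ) = n by push_cast; omega]
  · intro h a b hI
    obtain ⟨y, h1, h2⟩ := (IntE_cells M ω _ _).1 hI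
    refine h y ⟨?_, ?_⟩
    · simp only [mem_iUnion, Set.mem_Iic]
      exact ⟨_, by omega, h1⟩
    · simp only [mem_iUnion, Set.mem_Ici]
      exact ⟨_, by push_cast; omega, h2⟩

lemma piv_ae {d : ℕ} {p : PMF ℕ} (M : BiInfModel d p) : ∀ᵐ ω ∂M.P,
    (StrictMono fun i => M.piv i ω) ∧ (∀ i, IsT (cells M ω) (M.piv i ω)) ∧
    (∀ j, IsT (cells M ω) j → ∃ i, M.piv i ω = j) ∧ M.piv 0 ω ≤ 0 ∧ 0 < M.piv 1 ω := by
  filter_upwards [M.hpiv] with ω h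
  obtain ⟨h1, h2, h3, h4, h5⟩ := h
  refine ⟨h1, fun i => (IsT_cells M ω _).2 (h2 i), fun j hj => h3 j ((IsT_cells M ω _).1 hj), ?_, h4⟩
  by_contra hc
  have h6 := h5 (M.piv 0 ω) (by omega) (h2 0)
  have h7 : M.piv 0 ω < M.piv 1 ω := h1 (by norm_num)
  omega

lemma P_le {d : ℕ} {p : PMF ℕ} [NeZero d] [Fact (HasMeanOne p)] (M : BiInfModel d p)
    (A : Set (ℤ → Cell d)) : M.P {ω | cells M ω ∈ A} ≤ seqLaw d p A := by
  have h := cells_law M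
  rw [← h.2]
  exact Measure.le_map_apply h.1 A

lemma pos_T {d : ℕ} {p : PMF ℕ} [NeZero d] [Fact (HasMeanOne p)] (M : BiInfModel d p) :
    seqLaw d p {x | IsT x 0} ≠ 0 := by
  intro h0
  have h1 : ∀ j, seqLaw d p {x | IsT x j} = 0 := by
    intro j
    rw [← h0, ← seqLaw_shift p j (meas_IsT 0)]
    congr 1; ext x
    simp [IsT_shift]
  have h2 : M.P {ω | cells M ω ∈ ⋃ j, {x | IsT x j}} ≤ 0 := by
    refine (P_le M _).trans ?_
    rw [measure_iUnion_null h1]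
  have h3 : M.P {ω | cells M ω ∈ ⋃ j, {x | IsT x j}} = 1 := by
    refine (measure_congr ?_).trans (measure_univ (μ := M.P))
    filter_upwards [piv_ae M] with ω h
    refine propext ⟨fun _ => trivial, fun _ => ?_⟩
    exact mem_iUnion.2 ⟨_, h.2.1 0⟩
  rw [h3] at h2
  simp at h2

/-! ### From the gap at the origin to all gaps -/

lemma gap_zero_bound {d : ℕ} (p : PMF ℕ) [NeZero d] [Fact (HasMeanOne p)] (n h : ℕ)
    (hn : 2 * h ≤ n) :
    (h : ℝ≥0∞) * seqLaw d p {x | IsT x 0 ∧ Gap x 0 n} ≤ seqLaw d p {x | Gap x 0 (h + 1)} := by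
  have hmeas : ∀ k : ℕ, MeasurableSet {x : ℤ → Cell d | IsT x (-k) ∧ Gap x (-k) (n - k)} :=
    fun k => (meas_IsT _).inter (meas_Gap _ _)
  have h1 : ∀ k : ℕ, seqLaw d p {x | IsT x (-k) ∧ Gap x (-k) (n - k)} =
      seqLaw d p {x | IsT x 0 ∧ Gap x 0 n} := by
    intro k
    have hm0 : MeasurableSet {x : ℤ → Cell d | IsT x 0 ∧ Gap x 0 n} :=
      (meas_IsT 0).inter (meas_Gap _ _)
    rw [← seqLaw_shift p (-k) hm0]
    congr 1; ext x
    simp [IsT_shift, Gap_shift, sub_eq_add_neg]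
  calc (h : ℝ≥0∞) * seqLaw d p {x | IsT x 0 ∧ Gap x 0 n}
      = ∑ k ∈ Finset.range h, seqLaw d p {x | IsT x (-k) ∧ Gap x (-k) (n - k)} := by
        simp [h1]
    _ = seqLaw d p (⋃ k ∈ Finset.range h, {x | IsT x (-k) ∧ Gap x (-k) (n - k)}) := by
        rw [measure_biUnion_finset _ fun k _ => hmeas k]
        have : ∀ k ∈ Finset.range h, ∀ k' ∈ Finset.range h, k < k' →
            Disjoint {x : ℤ → Cell d | IsT x (-k) ∧ Gap x (-k) (n - k)}
              {x | IsT x (-k') ∧ Gap x (-k') (n - k')} := by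
          intro k hk k' hk' hkk
          rw [Set.disjoint_left]
          rintro x ⟨h2, _⟩ ⟨_, h3⟩
          simp only [Finset.mem_range] at hk hk'
          exact h3 (-k) (by omega) (by omega) h2
        intro k hk k' hk' hne
        rcases lt_or_gt_of_ne hne with h2 | h2
        · exact this k hk k' hk' h2
        · exact (this k' hk' k hk h2).symm
    _ ≤ _ := by
        refine measure_mono ?_
        intro x hx
        simp only [mem_iUnion, Finset.mem_range] at hx
        obtain ⟨k, hk, _, h3⟩ := hx
        intro j hj1 hj2
        exact h3 j (by omega) (by omega)

lemma transport {d : ℕ} (p : PMF ℕ) [NeZero d] [Fact (HasMeanOne p)] (n k : ℕ) (i : ℤ) :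
    ∑' g : ℤ, seqLaw d p {x | IsT x (-k) ∧ cntT x (-k) g = i ∧ IsT x g ∧ Gap x g (g + n)} ≤
      seqLaw d p {x | IsT x 0 ∧ Gap x 0 n} := by
  set F : ℤ → Set (ℤ → Cell d) := fun a => {x | IsT x a ∧ cntT x a 0 = i ∧ IsT x 0 ∧ Gap x 0 n}
  have hF : ∀ a, MeasurableSet (F a) := fun a =>
    (meas_IsT _).inter ((meas_cntT _ _ _).inter ((meas_IsT _).inter (meas_Gap _ _)))
  have h1 : ∀ g : ℤ, seqLaw d p {x | IsT x (-k) ∧ cntT x (-k) g = i ∧ IsT x g ∧ Gap x g (g + n)} =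
      seqLaw d p (F (-k - g)) := by
    intro g
    rw [← seqLaw_shift p g (hF _)]
    congr 1; ext x
    simp [F, IsT_shift, Gap_shift, cntT_shift, add_comm]
  simp only [h1]
  have h2 := (Equiv.subLeft (-(k : ℤ))).tsum_eq (fun a => seqLaw d p (F a))
  simp only [Equiv.subLeft_apply] at h2
  rw [h2, ← measure_iUnion _ hF]
  · refine measure_mono ?_
    intro x hx
    obtain ⟨a, ha⟩ := mem_iUnion.1 hx
    exact ha.2.2
  · have : ∀ a a', a < a' → Disjoint (F a) (F a') := by
      intro a a' haa
      rw [Set.disjoint_left]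
      rintro x ⟨_, h2, _⟩ ⟨h3, h4, _⟩
      have := cntT_strict x (b := 0) haa h3
      omega
    intro a a' hne
    rcases lt_or_gt_of_ne hne with h2 | h2
    · exact this a a' h2
    · exact (this a' a h2).symm

lemma gap_all {d : ℕ} {p : PMF ℕ} [NeZero d] [Fact (HasMeanOne p)] (M : BiInfModel d p)
    (i : ℤ) (n h : ℕ) (h1 : 2 * h ≤ n) (h2 : n ≤ 3 * h) :
    M.P {ω | (n : ℤ) ≤ M.piv (i + 1) ω - M.piv i ω} ≤ 5 * seqLaw d p {x | Gap x 0 (h + 1)} := by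
  set U : Set (ℤ → Cell d) := {x | Gap x 0 (h + 1)} ∪ {x | Gap x (-h) 1} ∪
    ⋃ k ∈ Finset.range n, ⋃ g : ℤ,
      {x | IsT x (-(k : ℕ)) ∧ cntT x (-(k : ℕ)) g = i ∧ IsT x g ∧ Gap x g (g + n)}
  have hae : M.P {ω | (n : ℤ) ≤ M.piv (i + 1) ω - M.piv i ω} ≤ M.P {ω | cells M ω ∈ U} := by
    refine measure_mono_ae ?_
    filter_upwards [piv_ae M] with ω hω hA
    obtain ⟨m1, m2, m3, m4, m5⟩ := hω
    have hA' : (n : ℤ) ≤ M.piv (i + 1) ω - M.piv i ω := hA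
    have hgap : ∀ i, Gap (cells M ω) (M.piv i ω) (M.piv (i + 1) ω) := by
      intro i j hj1 hj2 hT
      obtain ⟨k, rfl⟩ := m3 j hT
      have a1 := m1.lt_iff_lt.1 hj1
      have a2 := m1.lt_iff_lt.1 hj2
      omega
    have g0 := hgap 0
    rw [zero_add] at g0
    change cells M ω ∈ U
    by_cases c1 : (h : ℤ) < M.piv 1 ω
    · exact Or.inl (Or.inl fun j hj1 hj2 => g0 j (by omega) (by omega))
    by_cases c2 : M.piv 0 ω ≤ -(h : ℤ)
    · exact Or.inl (Or.inr fun j hj1 hj2 => g0 j (by omega) (by omega))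
    right
    obtain ⟨k, hk⟩ := Int.eq_ofNat_of_zero_le (show 0 ≤ -M.piv 0 ω by omega)
    have hk' : M.piv 0 ω = -(k : ℕ) := by omega
    simp only [mem_iUnion, Finset.mem_range]
    refine ⟨k, by omega, M.piv i ω, ?_⟩
    rw [← hk']
    refine ⟨m2 0, cntT_enum _ _ m1 m2 m3 i, m2 i, fun j hj1 hj2 => hgap i j hj1 (by omega)⟩
  have hsh : seqLaw d p {x : ℤ → Cell d | Gap x (-h) 1} = seqLaw d p {x | Gap x 0 (h + 1)} := by
    rw [← seqLaw_shift p (-h) (meas_Gap 0 _)]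
    congr 1; ext x
    simp [Gap_shift]
  have h0 := gap_zero_bound (d := d) p n h h1
  calc M.P {ω | (n : ℤ) ≤ M.piv (i + 1) ω - M.piv i ω} ≤ seqLaw d p U := hae.trans (P_le M U)
    _ ≤ seqLaw d p {x | Gap x 0 (h + 1)} + seqLaw d p {x | Gap x 0 (h + 1)} +
        (n : ℝ≥0∞) * seqLaw d p {x | IsT x 0 ∧ Gap x 0 n} := by
        refine (measure_union_le _ _).trans (add_le_add ((measure_union_le _ _).trans ?_) ?_)
        · rw [hsh]
        · refine (measure_biUnion_finset_le _ _).trans ?_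
          calc _ ≤ ∑ k ∈ Finset.range n, seqLaw d p {x : ℤ → Cell d | IsT x 0 ∧ Gap x 0 n} :=
                Finset.sum_le_sum fun k _ => (measure_iUnion_le _).trans (transport p n k i)
            _ = _ := by simp
    _ ≤ seqLaw d p {x | Gap x 0 (h + 1)} + seqLaw d p {x | Gap x 0 (h + 1)} +
        3 * seqLaw d p {x | Gap x 0 (h + 1)} := by
        refine add_le_add le_rfl ?_
        calc (n : ℝ≥0∞) * seqLaw d p {x | IsT x 0 ∧ Gap x 0 n}
            ≤ ((3 * h : ℕ) : ℝ≥0∞) * seqLaw d p {x | IsT x 0 ∧ Gap x 0 n} := by gcongr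
          _ = 3 * (h * seqLaw d p {x | IsT x 0 ∧ Gap x 0 n}) := by push_cast; ring
          _ ≤ _ := by gcongr
    _ = _ := by ring

/-! ### Independence of disjoint windows -/

lemma indep_windows {d : ℕ} (p : PMF ℕ) [NeZero d] [Fact (HasMeanOne p)] (S T : Finset ℤ)
    (hST : Disjoint S T) (A B : Set (ℤ → Cell d))
    (hA : ∀ x y, (∀ k ∈ S, x k = y k) → x ∈ A → y ∈ A)
    (hB : ∀ x y, (∀ k ∈ T, x k = y k) → x ∈ B → y ∈ B) :
    seqLaw d p (A ∩ B) = seqLaw d p A * seqLaw d p B := by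
  have hi : ProbabilityTheory.iIndepFun (fun (k : ℤ) (x : ℤ → Cell d) => x k) (seqLaw d p) :=
    ProbabilityTheory.iIndepFun_infinitePi (P := fun _ : ℤ => cellLaw d p)
      (X := fun _ x => x) fun _ => measurable_id
  have h := hi.indepFun_finset S T hST fun k => measurable_pi_apply k
  have key : ∀ (S : Finset ℤ) (A : Set (ℤ → Cell d)),
      (∀ x y, (∀ k ∈ S, x k = y k) → x ∈ A → y ∈ A) →
      A = (fun (x : ℤ → Cell d) (k : S) => x k) ⁻¹'
        ((fun (x : ℤ → Cell d) (k : S) => x k) '' A) := by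
    intro S A hA
    refine Set.Subset.antisymm (subset_preimage_image _ _) ?_
    rintro y ⟨x, hx, hxy⟩
    exact hA x y (fun k hk => congrFun hxy ⟨k, hk⟩) hx
  rw [key S A hA, key T B hB]
  exact h.measure_inter_preimage_eq_mul _ _ MeasurableSet.of_discrete MeasurableSet.of_discrete

lemma IntE_congr {d : ℕ} (x y : ℤ → Cell d) (m : ℤ) (l : ℕ)
    (h : ∀ k, m ≤ k → k ≤ m + l → x k = y k) (hx : IntE x m l) : IntE y m l := by
  obtain ⟨e, he, e', he', h1⟩ := hx
  refine ⟨e, ?_, e', ?_, ?_⟩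
  · rwa [← h m le_rfl (by omega)]
  · rwa [← h _ (by omega) le_rfl]
  · rw [h1]
    congr 1
    refine Finset.sum_congr rfl fun k _ => ?_
    rw [h _ (by omega) (by omega)]

/-- A local intersection around `j` at scale `L`. -/
def Bad {d : ℕ} (x : ℤ → Cell d) (j : ℤ) (L : ℕ) : Prop :=
  ∃ a b : ℕ, a < L ∧ b < L ∧ IntE x (j - a) (a + b + 1)

lemma Bad_congr {d : ℕ} (x y : ℤ → Cell d) (j : ℤ) (L : ℕ)
    (h : ∀ k ∈ Finset.Ioc (j - L) (j + L), x k = y k) (hx : Bad x j L) : Bad y j L := by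
  obtain ⟨a, b, ha, hb, hI⟩ := hx
  refine ⟨a, b, ha, hb, IntE_congr x y _ _ (fun k h1 h2 => h k ?_) hI⟩
  rw [Finset.mem_Ioc]
  push_cast at h2
  omega

lemma meas_Bad {d : ℕ} (j : ℤ) (L : ℕ) : MeasurableSet {x : ℤ → Cell d | Bad x j L} := by
  have : {x : ℤ → Cell d | Bad x j L} = ⋃ a : ℕ, ⋃ b : ℕ, ⋃ (_ : a < L), ⋃ (_ : b < L),
      {x | IntE x (j - a) (a + b + 1)} := by
    ext x; simp only [Bad, mem_iUnion, mem_ofPred_eq, exists_prop]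
  rw [this]
  exact MeasurableSet.iUnion fun a => MeasurableSet.iUnion fun b => MeasurableSet.iUnion fun _ =>
    MeasurableSet.iUnion fun _ => meas_IntE _ _

lemma not_T {d : ℕ} (x : ℤ → Cell d) (j : ℤ) (L : ℕ) (h : ¬ IsT x j) :
    Bad x j L ∨ Far x (j - L) (L + 1) ∨ Far x j (L + 1) := by
  simp only [IsT, not_forall, not_not] at h
  obtain ⟨a, b, hI⟩ := h
  by_cases ha : a < L
  · by_cases hb : b < L
    · exact Or.inl ⟨a, b, ha, hb, hI⟩
    · refine Or.inr (Or.inr ⟨a, b - L, ?_⟩)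
      rwa [show L + 1 + a + (b - L) = a + b + 1 by omega]
  · refine Or.inr (Or.inl ⟨a - L, b, ?_⟩)
    rw [show L + 1 + (a - L) + b = a + b + 1 by omega,
      show j - (L : ℤ) - ((a - L : ℕ) : ℤ) = j - a by omega]
    exact hI

lemma Bad_prob {d : ℕ} (p : PMF ℕ) [NeZero d] [Fact (HasMeanOne p)] (j : ℤ) (L : ℕ) :
    seqLaw d p {x | Bad x j L} ≤ 1 - seqLaw d p {x | IsT x 0} := by
  have h1 : seqLaw d p {x | IsT x j} = seqLaw d p {x | IsT x 0} := by
    rw [← seqLaw_shift p j (meas_IsT 0)]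
    congr 1; ext x
    simp [IsT_shift]
  rw [← h1, ← prob_compl_eq_one_sub (meas_IsT j)]
  refine measure_mono ?_
  rintro x ⟨a, b, _, _, hI⟩ hT
  exact hT a b hI

lemma Bad_inter {d : ℕ} (p : PMF ℕ) [NeZero d] [Fact (HasMeanOne p)] (L K : ℕ) :
    seqLaw d p {x | ∀ k < K, Bad x (2 * k * L + 1 : ℕ) L} ≤
      (1 - seqLaw d p {x | IsT x 0}) ^ K := by
  induction K with
  | zero => simp
  | succ K ih =>
    have e : {x : ℤ → Cell d | ∀ k < K + 1, Bad x (2 * k * L + 1 : ℕ) L} =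
        {x | ∀ k < K, Bad x (2 * k * L + 1 : ℕ) L} ∩ {x | Bad x (2 * K * L + 1 : ℕ) L} := by
      ext x
      constructor
      · intro h; exact ⟨fun k hk => h k (by omega), h K (by omega)⟩
      · rintro ⟨h1, h2⟩ k hk
        rcases Nat.lt_succ_iff_lt_or_eq.1 hk with h3 | rfl
        · exact h1 k h3
        · exact h2
    rw [e, indep_windows p (Finset.Ioc (1 - (L : ℤ)) (2 * K * L + 1 - L))
      (Finset.Ioc (((2 * K * L + 1 : ℕ) : ℤ) - L) ((2 * K * L + 1 : ℕ) + L)), pow_succ]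
    · exact mul_le_mul' ih (Bad_prob p _ _)
    · rw [Finset.disjoint_left]
      intro k h1 h2
      rw [Finset.mem_Ioc] at h1 h2
      push_cast at h2
      omega
    · intro x y hxy hx k hk
      refine Bad_congr x y _ _ (fun j hj => hxy j ?_) (hx k hk)
      rw [Finset.mem_Ioc] at hj ⊢
      push_cast at hj
      have h1 : (k : ℤ) * L + L ≤ K * L := by
        have : ((k : ℤ) + 1) * L ≤ K * L := by gcongr; omega
        linarith
      have h2 : 0 ≤ (k : ℤ) * L := by positivity
      constructor
      · nlinarith
      · nlinarith
    · intro x y hxy hx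
      exact Bad_congr x y _ _ hxy hx

lemma gap_tail {d : ℕ} (p : PMF ℕ) [NeZero d] [Fact (HasMeanOne p)] (L K h : ℕ) (hh : 1 ≤ h)
    (hK : 1 ≤ K) (hKL : 2 * K * L ≤ h) (q : ℝ≥0∞)
    (hq : ∀ m, seqLaw d p {x | Far x m (L + 1)} ≤ q) :
    seqLaw d p {x | Gap x 0 (h + 1)} ≤ (1 - seqLaw d p {x | IsT x 0}) ^ K + K * (q + q) := by
  have hsub : {x : ℤ → Cell d | Gap x 0 (h + 1)} ⊆
      {x | ∀ k < K, Bad x (2 * k * L + 1 : ℕ) L} ∪ ⋃ k ∈ Finset.range K,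
        ({x | Far x ((2 * k * L + 1 : ℕ) - L) (L + 1)} ∪
          {x | Far x (2 * k * L + 1 : ℕ) (L + 1)}) := by
    intro x hx
    by_cases hc : ∀ k < K, Bad x (2 * k * L + 1 : ℕ) L
    · exact Or.inl hc
    · right
      push Not at hc
      obtain ⟨k, hk, hB⟩ := hc
      have hle : 2 * k * L + 1 ≤ h := by
        rcases Nat.eq_zero_or_pos L with h0 | h0
        · subst h0; simpa using hh
        · have : 2 * (k + 1) * L ≤ 2 * K * L := by gcongr; omega
          nlinarith
      have hT := hx ((2 * k * L + 1 : ℕ) : ℤ) (by omega) (by omega)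
      simp only [mem_iUnion, Finset.mem_range]
      refine ⟨k, hk, ?_⟩
      rcases not_T x _ L hT with h1 | h1 | h1
      · exact absurd h1 hB
      · exact Or.inl h1
      · exact Or.inr h1
  refine (measure_mono hsub).trans ((measure_union_le _ _).trans
    (add_le_add (Bad_inter p L K) ?_))
  refine (measure_biUnion_finset_le _ _).trans ?_
  calc _ ≤ ∑ k ∈ Finset.range K, (q + q) := Finset.sum_le_sum fun k _ =>
        (measure_union_le _ _).trans (add_le_add (hq _) (hq _))
    _ = _ := by rw [Finset.sum_const, Finset.card_range, nsmul_eq_mul]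

/-! ### Final estimate -/

lemma final_calc {s c A : ℝ} (hs : 0 < s) (hc : 0 < c) (hc1 : c ≤ 1) (hA : 0 ≤ A) :
    ∃ C : ℝ, ∀ n : ℕ, 2 ≤ n → ∃ K : ℕ, 1 ≤ K ∧ ∀ L : ℕ, n / 2 < 2 * K * (L + 1) →
      (1 - c) ^ K + K * (A * ((L + 1 : ℕ) : ℝ) ^ (-s) + A * ((L + 1 : ℕ) : ℝ) ^ (-s)) ≤
        C * (Real.log n) ^ (1 + s) * (n : ℝ) ^ (-s) := by
  have hl2 : 0 < Real.log 2 := Real.log_pos (by norm_num)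
  set A' : ℝ := s / c + 1 / Real.log 2
  have hA' : 0 < A' := by positivity
  refine ⟨(Real.log 2) ^ (-(1 + s)) + A * (2 * A') ^ (1 + s) * 3 ^ s, fun n hn => ?_⟩
  have hn' : (2 : ℝ) ≤ n := by exact_mod_cast hn
  have hn0 : (0 : ℝ) < n := by linarith
  have hlog : Real.log 2 ≤ Real.log n := Real.log_le_log (by norm_num) hn'
  have hlog0 : 0 < Real.log n := by linarith
  set K := ⌈s / c * Real.log n⌉₊
  have hK0 : 0 < K := Nat.ceil_pos.2 (by positivity)
  refine ⟨K, hK0, fun L hL => ?_⟩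
  have hKr : (0 : ℝ) < K := by exact_mod_cast hK0
  have hK1 : s / c * Real.log n ≤ K := Nat.le_ceil _
  have hK2 : (K : ℝ) ≤ A' * Real.log n := by
    have h1 : (K : ℝ) < s / c * Real.log n + 1 := Nat.ceil_lt_add_one (by positivity)
    have h2 : 1 ≤ 1 / Real.log 2 * Real.log n := by
      rw [div_mul_eq_mul_div, one_mul, le_div_iff₀ hl2]; linarith
    have h3 : A' * Real.log n = s / c * Real.log n + 1 / Real.log 2 * Real.log n := by
      simp only [A']; ring
    linarith
  have hns : 0 < (n : ℝ) ^ (-s) := Real.rpow_pos_of_pos hn0 _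
  have p1 : (1 - c) ^ K ≤ (n : ℝ) ^ (-s) := by
    have h1 : 1 - c ≤ Real.exp (-c) := by
      have := Real.add_one_le_exp (-c); linarith
    calc (1 - c) ^ K ≤ (Real.exp (-c)) ^ K := pow_le_pow_left₀ (by linarith) h1 K
      _ = Real.exp (K * (-c)) := by rw [← Real.exp_nat_mul]
      _ ≤ Real.exp (Real.log n * (-s)) := by
        refine Real.exp_le_exp.2 ?_
        have h2 : s * Real.log n ≤ c * K := by
          calc s * Real.log n = c * (s / c * Real.log n) := by field_simp
            _ ≤ _ := by gcongr
        linarith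
      _ = _ := by rw [Real.rpow_def_of_pos hn0]
  have p2 : (n : ℝ) ^ (-s) ≤ (Real.log 2) ^ (-(1 + s)) * (Real.log n) ^ (1 + s) * (n : ℝ) ^ (-s) := by
    have h1 : 1 ≤ (Real.log 2) ^ (-(1 + s)) * (Real.log n) ^ (1 + s) := by
      rw [Real.rpow_neg hl2.le, inv_mul_eq_div, le_div_iff₀ (Real.rpow_pos_of_pos hl2 _), one_mul]
      exact Real.rpow_le_rpow hl2.le hlog (by linarith)
    nlinarith
  have hLr : (n : ℝ) / 3 / (2 * K) ≤ ((L + 1 : ℕ) : ℝ) := by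
    rw [div_le_iff₀ (by positivity), div_le_iff₀ (by norm_num)]
    have h1 : n ≤ (L + 1) * (2 * K) * 3 := by
      have h2 : n ≤ 3 * (n / 2) := by omega
      have h3 : (L + 1) * (2 * K) = 2 * K * (L + 1) := by ring
      rw [h3]; omega
    exact_mod_cast h1
  have p3 : ((L + 1 : ℕ) : ℝ) ^ (-s) ≤ (2 * K) ^ s * 3 ^ s * (n : ℝ) ^ (-s) := by
    calc ((L + 1 : ℕ) : ℝ) ^ (-s) ≤ ((n : ℝ) / 3 / (2 * K)) ^ (-s) :=
          Real.rpow_le_rpow_of_nonpos (by positivity) hLr (by linarith)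
      _ = _ := by
        rw [Real.div_rpow (by positivity) (by positivity), Real.div_rpow (by positivity)
          (by positivity), Real.rpow_neg (x := 2 * (K : ℝ)) (by positivity),
          Real.rpow_neg (x := (3 : ℝ)) (by norm_num), div_inv_eq_mul, div_inv_eq_mul]
        ring
  have p4 : K * (A * ((L + 1 : ℕ) : ℝ) ^ (-s) + A * ((L + 1 : ℕ) : ℝ) ^ (-s)) ≤
      A * (2 * A') ^ (1 + s) * 3 ^ s * (Real.log n) ^ (1 + s) * (n : ℝ) ^ (-s) := by
    have h1 : (2 * (K : ℝ)) ^ (1 + s) ≤ (2 * A') ^ (1 + s) * (Real.log n) ^ (1 + s) := by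
      rw [← Real.mul_rpow (by positivity) hlog0.le]
      exact Real.rpow_le_rpow (by positivity) (by linarith) (by linarith)
    have h2 : (2 * (K : ℝ)) ^ (1 + s) = 2 * K * (2 * K) ^ s := by
      rw [Real.rpow_add (by positivity), Real.rpow_one]
    calc K * (A * ((L + 1 : ℕ) : ℝ) ^ (-s) + A * ((L + 1 : ℕ) : ℝ) ^ (-s))
        = 2 * K * A * ((L + 1 : ℕ) : ℝ) ^ (-s) := by ring
      _ ≤ 2 * K * A * ((2 * K) ^ s * 3 ^ s * (n : ℝ) ^ (-s)) := by gcongr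
      _ = A * (2 * (K : ℝ)) ^ (1 + s) * 3 ^ s * (n : ℝ) ^ (-s) := by rw [h2]; ring
      _ ≤ A * ((2 * A') ^ (1 + s) * (Real.log n) ^ (1 + s)) * 3 ^ s * (n : ℝ) ^ (-s) := by gcongr
      _ = _ := by ring
  calc _ ≤ (Real.log 2) ^ (-(1 + s)) * (Real.log n) ^ (1 + s) * (n : ℝ) ^ (-s) +
        A * (2 * A') ^ (1 + s) * 3 ^ s * (Real.log n) ^ (1 + s) * (n : ℝ) ^ (-s) :=
        add_le_add (p1.trans p2) p4
    _ = _ := by ring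

theorem tail_of_gaps_between_pivotal_points
    (d : ℕ) (hd : 10 < d) (p : PMF ℕ)
    (hmean : HasMeanOne p) (hnontriv : p 1 < 1)
    (hsq : FiniteSecondMoment p) (hvar : PosVariance p)
    (M : BiInfModel d p) :
    ∃ C : ℝ, ∀ (i : ℤ) (n : ℕ), 2 ≤ n →
      (M.P {ω | (n : ℤ) ≤ M.piv (i + 1) ω - M.piv i ω}).toReal
        ≤ C * Real.rpow (Real.log n) (((d : ℝ) - 6) / 2) *
            Real.rpow (n : ℝ) (-(((d : ℝ) - 8) / 2)) := by
  have : NeZero d := ⟨by omega⟩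
  have : Fact (HasMeanOne p) := ⟨hmean⟩
  have hd' : (11 : ℝ) ≤ d := by exact_mod_cast hd
  obtain ⟨D, hD, hfar⟩ := Far_bound hd p hsq
  set c := (seqLaw d p {x | IsT x 0}).toReal
  have hc0 : 0 < c := ENNReal.toReal_pos (pos_T M) (by finiteness)
  have hc1 : c ≤ 1 := ENNReal.toReal_le_of_le_ofReal (by norm_num) (by simpa using prob_le_one)
  set s : ℝ := ((d : ℝ) - 8) / 2 with hs
  obtain ⟨C, hC⟩ := final_calc (s := s) (c := c) (A := D.toReal) (by rw [hs]; linarith) hc0 hc1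
    ENNReal.toReal_nonneg
  refine ⟨5 * C, fun i n hn => ?_⟩
  obtain ⟨K, hK, hCK⟩ := hC n hn
  set L := (n / 2) / (2 * K) with hL
  have hL1 : 2 * K * L ≤ n / 2 := Nat.mul_div_le _ _
  have hL2 : n / 2 < 2 * K * (L + 1) := Nat.lt_mul_div_succ _ (by omega)
  have h1 := gap_all M i n (n / 2) (by omega) (by omega)
  have h2 := gap_tail (d := d) p L K (n / 2) (by omega) hK hL1 _
    (fun m => hfar m (L + 1) (Nat.le_add_left 1 L))
  have h3 := hCK L hL2
  have e : ((d : ℝ) - 6) / 2 = 1 + s := by rw [hs]; ring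
  rw [e]
  have h4 : M.P {ω | (n : ℤ) ≤ M.piv (i + 1) ω - M.piv i ω} ≤
      5 * ((1 - seqLaw d p {x | IsT x 0}) ^ K +
        K * (D * ENNReal.ofReal (((L + 1 : ℕ) : ℝ) ^ (-s)) +
          D * ENNReal.ofReal (((L + 1 : ℕ) : ℝ) ^ (-s)))) :=
    h1.trans (by gcongr)
  have h5 := ENNReal.toReal_mono (by finiteness) h4
  have hpos : 0 ≤ ((L + 1 : ℕ) : ℝ) ^ (-s) := by positivity
  rw [ENNReal.toReal_mul, ENNReal.toReal_add (by finiteness) (by finiteness), ENNReal.toReal_pow,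
    ENNReal.toReal_sub_of_le prob_le_one (by finiteness), ENNReal.toReal_mul,
    ENNReal.toReal_add (by finiteness) (by finiteness), ENNReal.toReal_mul,
    ENNReal.toReal_ofReal hpos] at h5
  simp only [ENNReal.toReal_ofNat, ENNReal.toReal_one, ENNReal.toReal_natCast] at h5
  change _ ≤ 5 * C * (Real.log n) ^ (1 + s) * (n : ℝ) ^ (-s)
  calc _ ≤ _ := h5
    _ ≤ 5 * (C * (Real.log n) ^ (1 + s) * (n : ℝ) ^ (-s)) := by gcongr
    _ = _ := by ring
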